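/- arXiv:1403.7033 — 4 statements merged into one kernel-verified Lean document; each statement's English description precedes it below -/
import Mathlib

section
/- Let m ≥ 2, N ≥ 1, let Λ be a subset of {α ∈ ℕ₀^N : |α| = m}, and let (c_α)_{α∈Λ} be complex numbers. Then (∑_{α∈Λ} (|c_α| / √(α+1))^{2m/(m+1)})^{(m+1)/(2m)} ≤ m^{(m-1)/(2m)} · (m/(m-1))^{m-1} · sup_{z ∈ closed unit polydisc of ℂ^N} |∑_{α∈Λ} c_α z^α|. -/
open Finset

open MeasureTheory Polynomial in
/-- unit circle exponential -/
noncomputable def bhE (x : AddCircle (1:ℝ)) : ℂ := (AddCircle.toCircle x : ℂ)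

lemma bhE_norm (x) : ‖bhE x‖ = 1 := Circle.norm_coe _

lemma bhE_cont : Continuous bhE := by
  unfold bhE
  exact continuous_subtype_val.comp AddCircle.continuous_toCircle

lemma bhE_pow (x) (n : ℕ) : bhE x ^ n = fourier (n:ℤ) x := by
  simp [bhE, fourier_apply, AddCircle.toCircle_nsmul]

noncomputable abbrev bhMu : MeasureTheory.Measure (AddCircle (1:ℝ)) := AddCircle.haarAddCircle

lemma bh_integrable {X : Type*} [TopologicalSpace X] [CompactSpace X] [MeasurableSpace X]
    [OpensMeasurableSpace X]
    {F : Type*} [NormedAddCommGroup F] [SecondCountableTopologyEither X F]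
    (μ : MeasureTheory.Measure X) [MeasureTheory.IsFiniteMeasure μ]
    {f : X → F} (hf : Continuous f) : MeasureTheory.Integrable f μ := by
  obtain ⟨C, hC⟩ := (isCompact_range hf.norm).bddAbove
  exact MeasureTheory.Integrable.of_bound hf.aestronglyMeasurable C
    (Filter.Eventually.of_forall fun x => hC ⟨x, rfl⟩)

lemma bh_orth (k l : ℕ) :
    ∫ x, bhE x ^ k * (starRingEnd ℂ) (bhE x ^ l) ∂bhMu = if k = l then 1 else 0 := by
  have h := (orthonormal_iff_ite.mp (orthonormal_fourier (T := (1:ℝ)))) (l:ℤ) (k:ℤ)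
  rw [MeasureTheory.ContinuousMap.inner_toLp] at h
  simp only [bhE_pow]
  rw [h]
  simp [eq_comm]

/-- coefficient extraction -/
lemma bh_coeff (p : Polynomial ℂ) (n : ℕ) :
    ∫ x, p.eval (bhE x) * (starRingEnd ℂ) (bhE x ^ n) ∂bhMu = p.coeff n := by
  simp only [Polynomial.eval_eq_sum_range, Finset.sum_mul, mul_assoc]
  rw [MeasureTheory.integral_finsetSum]
  · simp only [MeasureTheory.integral_const_mul, bh_orth]
    simp
    intro h
    exact (Polynomial.coeff_eq_zero_of_natDegree_lt (by omega)).symm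
  · intro i _
    apply bh_integrable
    have := bhE_cont
    fun_prop

lemma bh_parseval (p : Polynomial ℂ) (K : ℕ) :
    ∑ n ∈ range K, ‖p.coeff n‖ ^ 2 ≤ ∫ x, ‖p.eval (bhE x)‖ ^ 2 ∂bhMu := by
  have key : (∫ x, ((‖p.eval (bhE x)‖ ^ 2 : ℝ) : ℂ) ∂bhMu)
      = ∑ n ∈ range (p.natDegree + 1), ((‖p.coeff n‖ ^ 2 : ℝ) : ℂ) := by
    have : ∀ x, ((‖p.eval (bhE x)‖ ^ 2 : ℝ) : ℂ) = ∑ n ∈ range (p.natDegree + 1),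
        (starRingEnd ℂ) (p.coeff n) * (p.eval (bhE x) * (starRingEnd ℂ) (bhE x ^ n)) := by
      intro x
      have h1 : ((‖p.eval (bhE x)‖ ^ 2 : ℝ) : ℂ)
          = p.eval (bhE x) * (starRingEnd ℂ) (p.eval (bhE x)) := by
        rw [Complex.mul_conj']; push_cast; rfl
      rw [h1]
      conv_lhs => rw [Polynomial.eval_eq_sum_range (p := p) (bhE x), map_sum, Finset.mul_sum]
      rw [Polynomial.eval_eq_sum_range (p := p) (bhE x)]
      refine Finset.sum_congr rfl fun n _ => ?_
      simp only [map_mul]; ring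
    simp only [this]
    rw [MeasureTheory.integral_finsetSum]
    · simp only [MeasureTheory.integral_const_mul, bh_coeff]
      refine Finset.sum_congr rfl fun n _ => ?_
      rw [mul_comm, Complex.mul_conj']; push_cast; rfl
    · intro i _
      apply bh_integrable
      have := bhE_cont
      have := p.continuous
      fun_prop
  rw [integral_complex_ofReal] at key
  have key2 : ∫ x, ‖p.eval (bhE x)‖ ^ 2 ∂bhMu
      = ∑ n ∈ range (p.natDegree + 1), ‖p.coeff n‖ ^ 2 := by exact_mod_cast key
  rw [key2]
  rcases le_total K (p.natDegree + 1) with h | h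
  · exact Finset.sum_le_sum_of_subset_of_nonneg (range_mono h) (fun _ _ _ => by positivity)
  · apply le_of_eq
    symm
    apply Finset.sum_subset (range_mono h)
    intro n _ hn
    rw [Polynomial.coeff_eq_zero_of_natDegree_lt (by simpa using hn)]
    simp

lemma bh_square (q : Polynomial ℂ) (K : ℕ) :
    ∑ n ∈ range K, ‖(q ^ 2).coeff n‖ ^ 2 / ((n:ℝ) + 1)
      ≤ (∫ x, ‖(q ^ 2).eval (bhE x)‖ ∂bhMu) ^ 2 := by
  have h1 : ∀ n ∈ range K, ‖(q ^ 2).coeff n‖ ^ 2 / ((n:ℝ) + 1)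
      ≤ ∑ kl ∈ antidiagonal n, ‖q.coeff kl.1‖ ^ 2 * ‖q.coeff kl.2‖ ^ 2 := by
    intro n _
    rw [div_le_iff₀ (by positivity), pow_two q, Polynomial.coeff_mul]
    calc ‖∑ x ∈ antidiagonal n, q.coeff x.1 * q.coeff x.2‖ ^ 2
        ≤ (∑ x ∈ antidiagonal n, ‖q.coeff x.1 * q.coeff x.2‖) ^ 2 := by
          gcongr; exact norm_sum_le _ _
      _ ≤ #(antidiagonal n) * ∑ x ∈ antidiagonal n, ‖q.coeff x.1 * q.coeff x.2‖ ^ 2 :=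
          sq_sum_le_card_mul_sum_sq
      _ = _ := by
          simp only [norm_mul, mul_pow, Nat.card_antidiagonal]; push_cast; ring
  refine (Finset.sum_le_sum h1).trans ?_
  have h2 : ∑ n ∈ range K, ∑ kl ∈ antidiagonal n, ‖q.coeff kl.1‖ ^ 2 * ‖q.coeff kl.2‖ ^ 2
      ≤ (∑ n ∈ range K, ‖q.coeff n‖ ^ 2) ^ 2 := by
    rw [pow_two, Finset.sum_mul_sum, ← Finset.sum_product', Finset.sum_sigma']
    have hinj : Set.InjOn (fun x : (_ : ℕ) × (ℕ × ℕ) => x.2)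
        ((range K).sigma fun n => antidiagonal n : Finset ((_ : ℕ) × (ℕ × ℕ))) := by
      rintro ⟨n, k⟩ h1 ⟨n', k'⟩ h2 h
      simp at h1 h2 h
      subst h
      have : n = n' := by omega
      subst this; rfl
    have := Finset.sum_image (f := fun y : ℕ × ℕ => ‖q.coeff y.1‖ ^ 2 * ‖q.coeff y.2‖ ^ 2) hinj
    rw [← this]
    refine Finset.sum_le_sum_of_subset_of_nonneg ?_ (fun _ _ _ => by positivity)
    intro y hy
    simp only [Finset.mem_image, Finset.mem_sigma, Finset.mem_range, HasAntidiagonal.mem_antidiagonal] at hy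
    obtain ⟨⟨n, k⟩, ⟨h1, h2⟩, rfl⟩ := hy
    simp only [Finset.mem_product, Finset.mem_range]
    simp only at h1 h2
    omega
  refine h2.trans ?_
  have h3 := bh_parseval q K
  have h4 : ∀ x, ‖(q ^ 2).eval (bhE x)‖ = ‖q.eval (bhE x)‖ ^ 2 := by intro x; simp
  simp only [h4]
  gcongr

lemma bh_limit {u : ℕ → AddCircle (1:ℝ) → ℂ} {v : AddCircle (1:ℝ) → ℂ} (C : ℝ)
    (hu : ∀ j, Continuous (u j)) (hb : ∀ᶠ j in Filter.atTop, ∀ x, ‖u j x‖ ≤ C)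
    (hl : ∀ x, Filter.Tendsto (fun j => u j x) Filter.atTop (nhds (v x))) :
    Filter.Tendsto (fun j => ∫ x, u j x ∂bhMu) Filter.atTop (nhds (∫ x, v x ∂bhMu)) := by
  refine MeasureTheory.tendsto_integral_filter_of_dominated_convergence (fun _ => C)
    (Filter.Eventually.of_forall fun j => (hu j).aestronglyMeasurable) ?_
    (MeasureTheory.integrable_const _) (Filter.Eventually.of_forall hl)
  filter_upwards [hb] with j hj
  exact Filter.Eventually.of_forall hj

lemma bh_approx (p : Polynomial ℂ) (g : ℂ → ℂ) (R : ℝ) (hR : 1 < R)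
    (hg : DifferentiableOn ℂ g (Metric.ball 0 R))
    (hgp : ∀ z ∈ Metric.ball (0:ℂ) R, g z ^ 2 = p.eval z) (K : ℕ) :
    ∑ n ∈ range K, ‖p.coeff n‖ ^ 2 / ((n:ℝ) + 1) ≤ (∫ x, ‖p.eval (bhE x)‖ ∂bhMu) ^ 2 := by
  obtain ⟨r, hr1, hrR⟩ := exists_between hR
  obtain ⟨s, hs1, hsr⟩ := exists_between hr1
  lift r to NNReal using by linarith
  lift s to NNReal using by linarith
  have hps := (hg.mono (s := Metric.closedBall (0:ℂ) r)
    (Metric.closedBall_subset_ball hrR)).hasFPowerSeriesOnBall (by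
      exact_mod_cast (by linarith : (0:ℝ) < r))
  set ps := cauchyPowerSeries g 0 r
  have hunif := hps.tendstoUniformlyOn (r' := s) (by exact_mod_cast hsr)
  have hmem : ∀ x, bhE x ∈ Metric.ball (0:ℂ) s := by
    intro x; simp [bhE_norm]; exact_mod_cast hs1
  have hmemR : ∀ x, bhE x ∈ Metric.ball (0:ℂ) R := by
    intro x; simp [bhE_norm]; exact hR
  let q : ℕ → Polynomial ℂ := fun j => ∑ k ∈ range j, Polynomial.monomial k (ps.coeff k)
  have hq : ∀ j z, (q j).eval z = ps.partialSum j z := by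
    intro j z
    simp [q, Polynomial.eval_finsetSum, FormalMultilinearSeries.partialSum, mul_comm]
  have hlim : ∀ x, Filter.Tendsto (fun j => (q j).eval (bhE x)) Filter.atTop
      (nhds (g (bhE x))) := by
    intro x
    simp only [hq]
    simpa using hunif.tendsto_at (hmem x)
  have hgc : Continuous fun x => g (bhE x) :=
    hg.continuousOn.comp_continuous bhE_cont hmemR
  obtain ⟨C, hC⟩ := (isCompact_range hgc.norm).bddAbove
  have hC' : ∀ x, ‖g (bhE x)‖ ≤ C := fun x => hC ⟨x, rfl⟩
  have hbd : ∀ᶠ j in Filter.atTop, ∀ x, ‖(q j).eval (bhE x)‖ ≤ C + 1 := by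
    have := (Metric.tendstoUniformlyOn_iff.mp hunif) 1 one_pos
    filter_upwards [this] with j hj x
    have h := hj (bhE x) (hmem x)
    rw [← hq, zero_add, dist_eq_norm, norm_sub_rev] at h
    have := norm_sub_norm_le ((q j).eval (bhE x)) (g (bhE x))
    have := hC' x
    linarith
  have hqc : ∀ j, Continuous fun x => (q j).eval (bhE x) := fun j =>
    (q j).continuous.comp bhE_cont
  have hcoef : ∀ n, Filter.Tendsto (fun j => ((q j) ^ 2).coeff n) Filter.atTop
      (nhds (p.coeff n)) := by
    intro n
    simp only [← bh_coeff]
    have : ∀ x, p.eval (bhE x) = g (bhE x) ^ 2 := fun x => (hgp _ (hmemR x)).symm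
    simp only [this, Polynomial.eval_pow]
    refine bh_limit ((C + 1) ^ 2) ?_ ?_ ?_
    · intro j
      have := hqc j
      have := bhE_cont
      fun_prop
    · filter_upwards [hbd] with j hj x
      simp only [norm_mul, norm_pow, bhE_norm, RCLike.norm_conj, one_pow, mul_one]
      gcongr
      exact hj x
    · intro x
      exact ((hlim x).pow 2).mul_const _
  have hint : Filter.Tendsto (fun j => ∫ x, ‖((q j) ^ 2).eval (bhE x)‖ ∂bhMu) Filter.atTop
      (nhds (∫ x, ‖p.eval (bhE x)‖ ∂bhMu)) := by
    have : ∀ x, p.eval (bhE x) = g (bhE x) ^ 2 := fun x => (hgp _ (hmemR x)).symm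
    have h := bh_limit (u := fun j x => ((‖((q j) ^ 2).eval (bhE x)‖ : ℝ) : ℂ))
      (v := fun x => ((‖p.eval (bhE x)‖ : ℝ) : ℂ)) ((C+1)^2) ?_ ?_ ?_
    · simp only [integral_complex_ofReal] at h
      exact (Complex.continuous_re.tendsto _).comp h
    · intro j
      have := hqc j
      simp only [Polynomial.eval_pow]
      fun_prop
    · filter_upwards [hbd] with j hj x
      simp only [Polynomial.eval_pow, norm_pow, Complex.norm_real, norm_norm]
      gcongr
      exact hj x
    · intro x
      simp only [this, Polynomial.eval_pow]
      exact (Complex.continuous_ofReal.tendsto _).comp ((hlim x).pow 2).norm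
  refine le_of_tendsto_of_tendsto ?_ (hint.pow 2)
    (Filter.Eventually.of_forall fun j => bh_square (q j) K)
  exact tendsto_finsetSum _ fun n _ => ((hcoef n).norm.pow 2).div_const _

/-- existence of a holomorphic square root -/
lemma bh_sqrt (c : ℂ) (t : Multiset ℂ) (ht : ∀ w ∈ t, ‖w‖ < 1) :
    ∃ R : ℝ, 1 < R ∧ ∃ g : ℂ → ℂ, DifferentiableOn ℂ g (Metric.ball 0 R) ∧
      ∀ z ∈ Metric.ball (0:ℂ) R, g z ^ 2 =
        (Polynomial.C c * (t.map fun w => 1 - Polynomial.C w * Polynomial.X).prod).eval z := by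
  induction t using Multiset.induction_on with
  | empty =>
    obtain ⟨d, hd⟩ := IsAlgClosed.exists_pow_nat_eq c (n := 2) (by norm_num)
    refine ⟨2, by norm_num, fun _ => d, differentiableOn_const _, fun z _ => ?_⟩
    simp [hd]
  | cons w t ih =>
    obtain ⟨R, hR, g, hg, hgz⟩ := ih fun w hw => ht w (Multiset.mem_cons_of_mem hw)
    have hw : ‖w‖ < 1 := ht w (Multiset.mem_cons_self w t)
    have hw0 := norm_nonneg w
    have hkey : ∀ z ∈ Metric.ball (0:ℂ) (min R (2 / (1 + ‖w‖))),
        1 - w * z ∈ Complex.slitPlane := by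
      intro z hz
      have hz' : ‖z‖ < 2 / (1 + ‖w‖) := by
        have := Metric.ball_subset_ball (min_le_right R (2 / (1 + ‖w‖))) hz
        simpa using this
      have h1 : ‖w * z‖ < 1 := by
        rw [norm_mul]
        rw [lt_div_iff₀ (by positivity)] at hz'
        nlinarith [norm_nonneg z]
      left
      have := Complex.re_le_norm (w * z)
      simp only [Complex.sub_re, Complex.one_re]
      linarith
    refine ⟨min R (2 / (1 + ‖w‖)), ?_, fun z => g z * (1 - w * z) ^ (1 / 2 : ℂ), ?_, ?_⟩
    · rw [lt_min_iff]
      refine ⟨hR, ?_⟩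
      rw [lt_div_iff₀ (by positivity)]
      linarith
    · refine (hg.mono (Metric.ball_subset_ball (min_le_left _ _))).mul ?_
      refine DifferentiableOn.cpow_const (by fun_prop) hkey
    · intro z hz
      have h1 := hgz z (Metric.ball_subset_ball (min_le_left _ _) hz)
      rw [mul_pow, h1]
      have h2 : ((1 - w * z) ^ (1 / 2 : ℂ)) ^ 2 = 1 - w * z := by
        rw [one_div]
        exact Complex.cpow_nat_inv_pow _ (by norm_num)
      rw [h2]
      simp
      ring

lemma bh_base_lt (c : ℂ) (t : Multiset ℂ) (ht : ∀ w ∈ t, ‖w‖ < 1) (p : Polynomial ℂ)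
    (hp : p = Polynomial.C c * (t.map fun w => 1 - Polynomial.C w * Polynomial.X).prod)
    (K : ℕ) :
    ∑ n ∈ range K, ‖p.coeff n‖ ^ 2 / ((n:ℝ) + 1) ≤ (∫ x, ‖p.eval (bhE x)‖ ∂bhMu) ^ 2 := by
  obtain ⟨R, hR, g, hg, hgz⟩ := bh_sqrt c t ht
  exact bh_approx p g R hR hg (hp ▸ hgz) K

lemma bh_base_le (c : ℂ) (t : Multiset ℂ) (ht : ∀ w ∈ t, ‖w‖ ≤ 1) (p : Polynomial ℂ)
    (hp : p = Polynomial.C c * (t.map fun w => 1 - Polynomial.C w * Polynomial.X).prod)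
    (K : ℕ) :
    ∑ n ∈ range K, ‖p.coeff n‖ ^ 2 / ((n:ℝ) + 1) ≤ (∫ x, ‖p.eval (bhE x)‖ ∂bhMu) ^ 2 := by
  let r : ℕ → ℝ := fun j => 1 - 1 / ((j:ℝ) + 1)
  have hr : Filter.Tendsto r Filter.atTop (nhds 1) := by
    have := (tendsto_one_div_add_atTop_nhds_zero_nat (𝕜 := ℝ)).const_sub 1
    rw [sub_zero] at this
    exact this
  have hr0 : ∀ j, 0 ≤ r j := by
    intro j
    simp only [r, sub_nonneg]
    rw [div_le_one (by positivity)]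
    linarith [(Nat.cast_nonneg j : (0:ℝ) ≤ j)]
  have hr1 : ∀ j, r j < 1 := by
    intro j
    simp only [r, sub_lt_self_iff]
    positivity
  let q : ℕ → Polynomial ℂ := fun j => p.comp (Polynomial.C (r j : ℂ) * Polynomial.X)
  have hrC : Filter.Tendsto (fun j => (r j : ℂ)) Filter.atTop (nhds 1) := by
    have := (Complex.continuous_ofReal.tendsto 1).comp hr
    rw [Complex.ofReal_one] at this
    exact this
  have hq : ∀ j, ∑ n ∈ range K, ‖(q j).coeff n‖ ^ 2 / ((n:ℝ) + 1)
      ≤ (∫ x, ‖(q j).eval (bhE x)‖ ∂bhMu) ^ 2 := by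
    intro j
    refine bh_base_lt c (t.map fun w => w * (r j : ℂ)) ?_ (q j) ?_ K
    · intro w hw
      obtain ⟨v, hv, rfl⟩ := Multiset.mem_map.mp hw
      rw [norm_mul, Complex.norm_real, Real.norm_eq_abs, abs_of_nonneg (hr0 j)]
      have := ht v hv
      nlinarith [norm_nonneg v, hr0 j, hr1 j]
    · simp only [q, hp, Polynomial.mul_comp, Polynomial.C_comp, Polynomial.multiset_prod_comp,
        Multiset.map_map]
      congr 2
      refine Multiset.map_congr rfl fun w _ => ?_
      simp [mul_assoc]
  have hev : ∀ j x, (q j).eval (bhE x) = p.eval ((r j : ℂ) * bhE x) := by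
    intro j x; simp [q]
  obtain ⟨C, hC⟩ := ((isCompact_closedBall (0:ℂ) 1).image p.continuous.norm).bddAbove
  have hint : Filter.Tendsto (fun j => ∫ x, ‖(q j).eval (bhE x)‖ ∂bhMu) Filter.atTop
      (nhds (∫ x, ‖p.eval (bhE x)‖ ∂bhMu)) := by
    have h := bh_limit (u := fun j x => ((‖(q j).eval (bhE x)‖ : ℝ) : ℂ))
      (v := fun x => ((‖p.eval (bhE x)‖ : ℝ) : ℂ)) C ?_ ?_ ?_
    · simp only [integral_complex_ofReal] at h
      exact (Complex.continuous_re.tendsto _).comp h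
    · intro j
      have := (q j).continuous
      have := bhE_cont
      fun_prop
    · refine Filter.Eventually.of_forall fun j x => ?_
      rw [Complex.norm_real, norm_norm, hev]
      refine hC ⟨_, ?_, rfl⟩
      simp only [Metric.mem_closedBall, dist_zero_right, norm_mul, bhE_norm, mul_one,
        Complex.norm_real, Real.norm_eq_abs, abs_of_nonneg (hr0 j)]
      exact (hr1 j).le
    · intro x
      simp only [hev]
      have h1 : Filter.Tendsto (fun j => (r j : ℂ) * bhE x) Filter.atTop (nhds (bhE x)) := by
        simpa using hrC.mul_const (bhE x)
      exact (Complex.continuous_ofReal.tendsto _).comp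
        ((p.continuous.tendsto _).comp h1).norm
  refine le_of_tendsto_of_tendsto ?_ (hint.pow 2) (Filter.Eventually.of_forall hq)
  refine tendsto_finsetSum _ fun n _ => Filter.Tendsto.div_const (Filter.Tendsto.pow
    (Filter.Tendsto.norm ?_) 2) _
  simp only [q, Polynomial.comp_C_mul_X_coeff]
  simpa using (hrC.pow n).const_mul (p.coeff n)

/-- reflecting a zero increases the Bergman energy -/
lemma bh_reflect (q : Polynomial ℂ) (a : ℂ) (ha : ‖a‖ ≤ 1) (K : ℕ) :
    ∑ n ∈ range K, ‖((Polynomial.X - Polynomial.C a) * q).coeff n‖ ^ 2 / ((n:ℝ) + 1) ≤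
    ∑ n ∈ range K, ‖((1 - Polynomial.C ((starRingEnd ℂ) a) * Polynomial.X) * q).coeff n‖ ^ 2
      / ((n:ℝ) + 1) := by
  have key : ∀ u v : ℂ, ‖v - (starRingEnd ℂ) a * u‖ ^ 2
      = ‖u - a * v‖ ^ 2 + (1 - ‖a‖ ^ 2) * (‖v‖ ^ 2 - ‖u‖ ^ 2) := by
    intro u v
    simp only [Complex.sq_norm, Complex.normSq_apply, Complex.sub_re, Complex.sub_im,
      Complex.mul_re, Complex.mul_im, Complex.conj_re, Complex.conj_im]
    ring
  have ha2 : 0 ≤ 1 - ‖a‖ ^ 2 := by nlinarith [norm_nonneg a]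
  cases K with
  | zero => simp
  | succ K =>
    have main : ∀ L : ℕ, ∑ n ∈ range (L + 1),
          ‖((Polynomial.X - Polynomial.C a) * q).coeff n‖ ^ 2 / ((n:ℝ) + 1)
          + (1 - ‖a‖ ^ 2) * (‖q.coeff L‖ ^ 2 / (L + 1)) ≤
        ∑ n ∈ range (L + 1),
          ‖((1 - Polynomial.C ((starRingEnd ℂ) a) * Polynomial.X) * q).coeff n‖ ^ 2
          / ((n:ℝ) + 1) := by
      intro L
      induction L with
      | zero =>
        simp [sub_mul, mul_assoc, mul_pow]
      | succ L ih =>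
        rw [Finset.sum_range_succ _ (L + 1), Finset.sum_range_succ _ (L + 1)]
        have h1 : ((Polynomial.X - Polynomial.C a) * q).coeff (L + 1)
            = q.coeff L - a * q.coeff (L + 1) := by
          simp [sub_mul, Polynomial.coeff_X_mul]
        have h2 : ((1 - Polynomial.C ((starRingEnd ℂ) a) * Polynomial.X) * q).coeff (L + 1)
            = q.coeff (L + 1) - (starRingEnd ℂ) a * q.coeff L := by
          simp [sub_mul, mul_assoc, Polynomial.coeff_X_mul]
        rw [h1, h2, key]
        have h3 : (1 - ‖a‖ ^ 2) * (‖q.coeff L‖ ^ 2 / (((L + 1 : ℕ) : ℝ) + 1))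
            ≤ (1 - ‖a‖ ^ 2) * (‖q.coeff L‖ ^ 2 / ((L : ℝ) + 1)) := by
          gcongr
          push_cast; linarith
        have h4 : (‖q.coeff L - a * q.coeff (L + 1)‖ ^ 2
            + (1 - ‖a‖ ^ 2) * (‖q.coeff (L + 1)‖ ^ 2 - ‖q.coeff L‖ ^ 2))
              / (((L + 1 : ℕ) : ℝ) + 1)
            = ‖q.coeff L - a * q.coeff (L + 1)‖ ^ 2 / (((L + 1 : ℕ) : ℝ) + 1)
              + (1 - ‖a‖ ^ 2) * (‖q.coeff (L + 1)‖ ^ 2 / (((L + 1 : ℕ) : ℝ) + 1))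
              - (1 - ‖a‖ ^ 2) * (‖q.coeff L‖ ^ 2 / (((L + 1 : ℕ) : ℝ) + 1)) := by ring
        rw [h4]
        linarith
    have := main K
    have h5 : 0 ≤ (1 - ‖a‖ ^ 2) * (‖q.coeff K‖ ^ 2 / ((K:ℝ) + 1)) := by positivity
    linarith

lemma bh_factored (s : Multiset ℂ) : ∀ (c : ℂ) (t : Multiset ℂ), (∀ w ∈ t, ‖w‖ ≤ 1) → ∀ K : ℕ,
    ∀ p : Polynomial ℂ, p = (s.map fun a => Polynomial.X - Polynomial.C a).prod *
      (Polynomial.C c * (t.map fun w => 1 - Polynomial.C w * Polynomial.X).prod) →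
    ∑ n ∈ range K, ‖p.coeff n‖ ^ 2 / ((n:ℝ) + 1) ≤ (∫ x, ‖p.eval (bhE x)‖ ∂bhMu) ^ 2 := by
  induction s using Multiset.induction_on with
  | empty =>
    intro c t ht K p hp
    exact bh_base_le c t ht p (by simpa using hp) K
  | cons a s ih =>
    intro c t ht K p hp
    rcases le_or_gt ‖a‖ 1 with ha | ha
    · set q := (s.map fun a => Polynomial.X - Polynomial.C a).prod *
        (Polynomial.C c * (t.map fun w => 1 - Polynomial.C w * Polynomial.X).prod) with hq
      have hp' : p = (Polynomial.X - Polynomial.C a) * q := by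
        rw [hp, hq]; simp [mul_assoc]
      have h1 := bh_reflect q a ha K
      have h2 := ih c ((starRingEnd ℂ a) ::ₘ t) (by
        intro w hw
        rcases Multiset.mem_cons.mp hw with rfl | hw
        · simpa using ha
        · exact ht w hw) K ((1 - Polynomial.C ((starRingEnd ℂ) a) * Polynomial.X) * q) (by
          rw [hq]; simp; ring)
      rw [hp']
      refine h1.trans (h2.trans (le_of_eq ?_))
      congr 2
      ext x
      have : ‖1 - (starRingEnd ℂ) a * bhE x‖ = ‖bhE x - a‖ := by
        have h3 : bhE x * (starRingEnd ℂ) (bhE x) = 1 := by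
          rw [Complex.mul_conj', bhE_norm]; norm_num
        have h4 : 1 - (starRingEnd ℂ) a * bhE x = bhE x * (starRingEnd ℂ) (bhE x - a) := by
          rw [map_sub, mul_sub, h3]; ring
        rw [h4, norm_mul, bhE_norm, RCLike.norm_conj, one_mul]
      simp [this]
    · have ha0 : a ≠ 0 := by
        rintro rfl; simp at ha; linarith
      refine ih (-a * c) (a⁻¹ ::ₘ t) ?_ K p ?_
      · intro w hw
        rcases Multiset.mem_cons.mp hw with rfl | hw
        · rw [norm_inv]; exact inv_le_one_of_one_le₀ ha.le
        · exact ht w hw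
      · rw [hp]
        have : Polynomial.X - Polynomial.C a
            = Polynomial.C (-a) * (1 - Polynomial.C a⁻¹ * Polynomial.X) := by
          rw [mul_sub, ← mul_assoc, ← Polynomial.C_mul]
          simp [ha0]; ring
        simp only [Multiset.map_cons, Multiset.prod_cons, Polynomial.C_mul]
        rw [this]
        ring

/-- Carleman's inequality for polynomials. -/
lemma bh_carleman (p : Polynomial ℂ) (K : ℕ) :
    ∑ n ∈ range K, ‖p.coeff n‖ ^ 2 / ((n:ℝ) + 1) ≤ (∫ x, ‖p.eval (bhE x)‖ ∂bhMu) ^ 2 := by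
  refine bh_factored p.roots p.leadingCoeff 0 (by simp) K p ?_
  have := (IsAlgClosed.splits p).eq_prod_roots
  rw [Multiset.map_zero, Multiset.prod_zero, mul_one, mul_comm]
  exact this

lemma bh_carleman_fin (K : ℕ) (b : Fin K → ℂ) :
    ∑ k, ‖b k‖ ^ 2 / ((k:ℝ) + 1) ≤ (∫ x, ‖∑ k, b k * bhE x ^ (k:ℕ)‖ ∂bhMu) ^ 2 := by
  have h := bh_carleman (∑ k : Fin K, Polynomial.monomial (k:ℕ) (b k)) K
  have hc : ∀ k : Fin K, (∑ k : Fin K, Polynomial.monomial (k:ℕ) (b k)).coeff (k:ℕ) = b k := by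
    intro k
    simp [Polynomial.finsetSum_coeff, Polynomial.coeff_monomial, Fin.val_inj]
  rw [← Fin.sum_univ_eq_sum_range (fun n => ‖(∑ k : Fin K, Polynomial.monomial (k:ℕ)
    (b k)).coeff n‖ ^ 2 / ((n:ℝ) + 1))] at h
  simp only [hc] at h
  simpa [Polynomial.eval_finsetSum] using h

lemma bh_minkowski {X : Type*} [MeasurableSpace X] (μ : MeasureTheory.Measure X)
    {ι : Type*} [Fintype ι] (G : ι → X → ℝ) (H : X → ℝ)
    (hG : ∀ k, MeasureTheory.Integrable (G k) μ) (hH : MeasureTheory.Integrable H μ)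
    (hH0 : ∀ x, 0 ≤ H x) (hGH : ∀ x, ∑ k, G k x ^ 2 ≤ H x ^ 2) :
    ∑ k, (∫ x, G k x ∂μ) ^ 2 ≤ (∫ x, H x ∂μ) ^ 2 := by
  set I : ι → ℝ := fun k => ∫ x, G k x ∂μ with hI
  set s := ∑ k, I k ^ 2 with hs
  have hs0 : 0 ≤ s := by positivity
  have h1 : s = ∫ x, ∑ k, I k * G k x ∂μ := by
    rw [MeasureTheory.integral_finsetSum _ fun k _ => (hG k).const_mul _]
    simp only [MeasureTheory.integral_const_mul, hs, pow_two]
    rfl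
  have h2 : ∫ x, ∑ k, I k * G k x ∂μ ≤ ∫ x, Real.sqrt s * H x ∂μ := by
    refine MeasureTheory.integral_mono
      (MeasureTheory.integrable_finsetSum _ fun k _ => (hG k).const_mul _)
      (hH.const_mul _) fun x => ?_
    refine (Real.sum_mul_le_sqrt_mul_sqrt _ _ _).trans ?_
    refine mul_le_mul_of_nonneg_left ?_ (Real.sqrt_nonneg _)
    rw [← Real.sqrt_sq (hH0 x)]
    exact Real.sqrt_le_sqrt (hGH x)
  rw [MeasureTheory.integral_const_mul, ← h1] at h2
  have h3 : 0 ≤ ∫ x, H x ∂μ := MeasureTheory.integral_nonneg hH0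
  have h4 := Real.sq_sqrt hs0
  rcases (Real.sqrt_nonneg s).eq_or_lt with h | h
  · have : s = 0 := by rw [← h4, ← h]; norm_num
    rw [this]; positivity
  · have : Real.sqrt s ≤ ∫ x, H x ∂μ := by
      by_contra hc
      push Not at hc
      nlinarith
    nlinarith

lemma bh_torus (K : ℕ) : ∀ (N : ℕ) (a : (Fin N → Fin K) → ℂ),
    ∑ β, ‖a β‖ ^ 2 / ∏ j, ((β j : ℝ) + 1) ≤
      (∫ x, ‖∑ β, a β * ∏ j, bhE (x j) ^ (β j : ℕ)‖
        ∂(MeasureTheory.Measure.pi fun _ : Fin N => bhMu)) ^ 2 := by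
  intro N
  induction N with
  | zero =>
    intro a
    simp
  | succ N ih =>
    intro a
    let F : Fin K → (Fin N → AddCircle (1:ℝ)) → ℂ := fun k x =>
      ∑ β : Fin N → Fin K, a (Fin.cons k β) * ∏ j, bhE (x j) ^ (β j : ℕ)
    have hFc : ∀ k, Continuous (F k) := by
      intro k
      have := bhE_cont
      fun_prop
    have hsplit : ∀ {M : Type} [AddCommMonoid M] (f : (Fin (N + 1) → Fin K) → M),
        ∑ β, f β = ∑ k, ∑ β', f (Fin.cons k β') := by
      intro M _ f
      rw [← Fintype.sum_prod_type', ← (Fin.consEquiv fun _ => Fin K).sum_comp]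
      rfl
    have hL : ∑ β, ‖a β‖ ^ 2 / ∏ j, ((β j : ℝ) + 1)
        ≤ ∑ k, (∫ x, ‖F k x‖ / Real.sqrt ((k:ℝ) + 1)
          ∂(MeasureTheory.Measure.pi fun _ : Fin N => bhMu)) ^ 2 := by
      rw [hsplit]
      refine Finset.sum_le_sum fun k _ => ?_
      rw [MeasureTheory.integral_div, div_pow, Real.sq_sqrt (by positivity),
        le_div_iff₀ (by positivity), Finset.sum_mul]
      refine le_trans (le_of_eq ?_) (ih fun β => a (Fin.cons k β))
      refine Finset.sum_congr rfl fun β _ => ?_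
      rw [Fin.prod_univ_succ]
      simp only [Fin.cons_zero, Fin.cons_succ]
      have : ∏ j, (((β j : ℕ) : ℝ) + 1) ≠ 0 := by positivity
      field_simp
    let J : (Fin N → AddCircle (1:ℝ)) → ℝ := fun x =>
      ∫ t, ‖∑ k, F k x * bhE t ^ (k:ℕ)‖ ∂bhMu
    let G : (Fin (N + 1) → AddCircle (1:ℝ)) → ℝ := fun x =>
      ‖∑ β, a β * ∏ j, bhE (x j) ^ (β j : ℕ)‖
    have hGc : Continuous G := by
      have := bhE_cont
      fun_prop
    have hGF : ∀ t x, G (Fin.cons t x) = ‖∑ k, F k x * bhE t ^ (k:ℕ)‖ := by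
      intro t x
      simp only [G, F]
      rw [hsplit]
      congr 1
      refine Finset.sum_congr rfl fun k _ => ?_
      rw [Finset.sum_mul]
      refine Finset.sum_congr rfl fun β _ => ?_
      rw [Fin.prod_univ_succ]
      simp only [Fin.cons_zero, Fin.cons_succ]
      ring
    have hmp := (MeasureTheory.measurePreserving_piFinSuccAbove
      (fun _ : Fin (N + 1) => bhMu) 0).symm
    have hprodint : MeasureTheory.Integrable
        (fun z : AddCircle (1:ℝ) × (Fin N → AddCircle (1:ℝ)) => G (Fin.cons z.1 z.2))
        (bhMu.prod (MeasureTheory.Measure.pi fun _ : Fin N => bhMu)) := by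
      apply bh_integrable
      refine hGc.comp ?_
      refine continuous_pi fun i => ?_
      refine Fin.cases ?_ (fun j => ?_) i
      · simpa using continuous_fst
      · simp only [Fin.cons_succ]; fun_prop
    have hfub : ∫ x, G x ∂(MeasureTheory.Measure.pi fun _ : Fin (N + 1) => bhMu)
        = ∫ x, J x ∂(MeasureTheory.Measure.pi fun _ : Fin N => bhMu) := by
      rw [← hmp.integral_comp']
      have : ∀ z, G ((MeasurableEquiv.piFinSuccAbove (fun _ => AddCircle (1:ℝ)) 0).symm z)
          = G (Fin.cons z.1 z.2) := by
        intro z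
        congr 1
        exact Fin.insertNth_zero' _ _
      simp only [this]
      refine (MeasureTheory.integral_prod_symm _ hprodint).trans ?_
      simp only [J, hGF]
    have hJint : MeasureTheory.Integrable J
        (MeasureTheory.Measure.pi fun _ : Fin N => bhMu) := by
      have := hprodint.integral_prod_right
      simpa only [J, hGF] using this
    change _ ≤ (∫ x, G x ∂_) ^ 2
    rw [hfub]
    refine hL.trans (bh_minkowski _ _ J (fun k => ?_) hJint ?_ ?_)
    · apply bh_integrable
      have := hFc k
      fun_prop
    · intro x
      exact MeasureTheory.integral_nonneg fun t => norm_nonneg _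
    · intro x
      refine le_trans (le_of_eq ?_) (bh_carleman_fin K fun k => F k x)
      refine Finset.sum_congr rfl fun k _ => ?_
      rw [div_pow, Real.sq_sqrt (by positivity)]

lemma bh_torus_family {N : ℕ} {ι : Type*} (S : Finset ι) (b : ι → Fin N → ℕ)
    (hb : Set.InjOn b S) (c : ι → ℂ) :
    ∑ i ∈ S, ‖c i‖ ^ 2 / ∏ j, ((b i j : ℝ) + 1) ≤
      (∫ x, ‖∑ i ∈ S, c i * ∏ j, bhE (x j) ^ (b i j)‖
        ∂(MeasureTheory.Measure.pi fun _ : Fin N => bhMu)) ^ 2 := by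
  classical
  set K := (∑ i ∈ S, ∑ j, b i j) + 1 with hK
  have hbK : ∀ i ∈ S, ∀ j, b i j < K := by
    intro i hi j
    have h1 : b i j ≤ ∑ j, b i j := Finset.single_le_sum (fun _ _ => Nat.zero_le _) (mem_univ j)
    have h2 : ∑ j, b i j ≤ ∑ i ∈ S, ∑ j, b i j :=
      Finset.single_le_sum (f := fun i => ∑ j, b i j) (fun _ _ => Nat.zero_le _) hi
    omega
  let B : ι → Fin N → Fin K := fun i j => Fin.ofNat K (b i j)
  have hB : ∀ i ∈ S, ∀ j, (B i j : ℕ) = b i j := by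
    intro i hi j
    exact Nat.mod_eq_of_lt (hbK i hi j)
  let a : (Fin N → Fin K) → ℂ := fun β => ∑ i ∈ S with B i = β, c i
  have ha : ∀ i ∈ S, a (B i) = c i := by
    intro i hi
    simp only [a]
    rw [Finset.sum_eq_single i]
    · intro j hj hne
      exfalso
      simp only [Finset.mem_filter] at hj
      apply hne
      apply hb hj.1 hi
      funext k
      rw [← hB i hi, ← hB j hj.1, hj.2]
    · intro h
      simp [hi] at h
  have hBinj : Set.InjOn B S := by
    intro i hi j hj h
    apply hb hi hj
    funext k
    rw [← hB i hi, ← hB j hj, h]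
  have h := bh_torus K N a
  have hsum : ∀ {M : Type} [AddCommMonoid M] (f : (Fin N → Fin K) → M),
      (∀ β, a β = 0 → f β = 0) → ∑ β, f β = ∑ i ∈ S, f (B i) := by
    intro M _ f hf
    rw [← Finset.sum_image (f := f) hBinj]
    symm
    refine Finset.sum_subset (Finset.subset_univ _) fun β _ hβ => hf β ?_
    simp only [a]
    apply Finset.sum_eq_zero
    intro i hi
    simp only [Finset.mem_filter] at hi
    exact absurd (Finset.mem_image.mpr ⟨i, hi.1, hi.2⟩) hβ
  rw [hsum _ (by intro β hβ; simp [hβ])] at h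
  simp only [fun x : Fin N → AddCircle (1:ℝ) =>
    hsum (fun β => a β * ∏ j, bhE (x j) ^ (β j : ℕ)) (by intro β hβ; simp [hβ])] at h
  convert h using 1
  · refine Finset.sum_congr rfl fun i hi => ?_
    rw [ha i hi]
    simp only [hB i hi]
  · congr 2
    funext x
    congr 1
    refine Finset.sum_congr rfl fun i hi => ?_
    rw [ha i hi]
    simp only [hB i hi]

/-- partial derivative of the polynomial -/
noncomputable def bhD {N : ℕ} (Λ : Finset (Fin N → ℕ)) (c : (Fin N → ℕ) → ℂ) (n : Fin N)
    (z : Fin N → ℂ) : ℂ :=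
  ∑ α ∈ Λ, c α * (α n : ℂ) * ∏ j, z j ^ (Function.update α n (α n - 1) j)

lemma bh_hasDeriv {N : ℕ} (Λ : Finset (Fin N → ℕ)) (c : (Fin N → ℕ) → ℂ) (z y : Fin N → ℂ) :
    HasDerivAt (fun t : ℂ => ∑ α ∈ Λ, c α * ∏ j, (z j + t * y j) ^ α j)
      (∑ n, y n * bhD Λ c n z) 0 := by
  have h1 : ∀ α ∈ Λ, HasDerivAt (fun t : ℂ => c α * ∏ j, (z j + t * y j) ^ α j)
      (c α * ∑ n, (∏ j ∈ univ.erase n, (z j + 0 * y j) ^ α j) •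
        ((α n : ℂ) * (z n + 0 * y n) ^ (α n - 1) * y n)) 0 := by
    intro α _
    refine HasDerivAt.const_mul _ (HasDerivAt.fun_finsetProd fun n _ => ?_)
    have h2 : HasDerivAt (fun t : ℂ => z n + t * y n) (y n) 0 := by
      simpa using ((hasDerivAt_id (0:ℂ)).mul_const (y n)).const_add (z n)
    exact h2.fun_pow (α n)
  refine (HasDerivAt.fun_sum h1).congr_deriv ?_
  symm
  simp only [bhD, Finset.mul_sum]
  rw [Finset.sum_comm]
  refine Finset.sum_congr rfl fun α _ => Finset.sum_congr rfl fun n _ => ?_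
  rw [← Finset.mul_prod_erase univ _ (Finset.mem_univ n)]
  have : ∏ x ∈ univ.erase n, z x ^ Function.update α n (α n - 1) x
      = ∏ x ∈ univ.erase n, z x ^ α x := by
    refine Finset.prod_congr rfl fun x hx => ?_
    rw [Function.update_of_ne (Finset.ne_of_mem_erase hx)]
  rw [this]
  simp
  ring

lemma bh_bernstein {N m : ℕ} (hm : 2 ≤ m) (Λ : Finset (Fin N → ℕ))
    (hΛ : ∀ α ∈ Λ, ∑ j, α j = m) (c : (Fin N → ℕ) → ℂ) (M : ℝ)
    (hM : ∀ z : Fin N → ℂ, (∀ j, ‖z j‖ ≤ 1) → ‖∑ α ∈ Λ, c α * ∏ j, z j ^ α j‖ ≤ M)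
    (z : Fin N → ℂ) (hz : ∀ j, ‖z j‖ ≤ 1) :
    ∑ n, ‖bhD Λ c n z‖ ≤ m * ((m : ℝ) / ((m : ℝ) - 1)) ^ (m - 1) * M := by
  have hm' : (2:ℝ) ≤ m := by exact_mod_cast hm
  have hm1 : (0:ℝ) < (m:ℝ) - 1 := by linarith
  let y : Fin N → ℂ := fun n => (starRingEnd ℂ) (bhD Λ c n z) / ‖bhD Λ c n z‖
  have hy : ∀ n, ‖y n‖ ≤ 1 := by
    intro n
    simp only [y, norm_div, RCLike.norm_conj, Complex.norm_real, norm_norm]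
    exact div_self_le_one _
  have hyD : ∀ n, y n * bhD Λ c n z = (‖bhD Λ c n z‖ : ℂ) := by
    intro n
    simp only [y]
    rcases eq_or_ne (bhD Λ c n z) 0 with h | h
    · simp [h]
    · have : (‖bhD Λ c n z‖ : ℂ) ≠ 0 := by simpa using h
      rw [div_mul_eq_mul_div, mul_comm, Complex.mul_conj', div_eq_iff this, pow_two]
  have hd := bh_hasDeriv Λ c z y
  simp only [hyD] at hd
  set f : ℂ → ℂ := fun t : ℂ => ∑ α ∈ Λ, c α * ∏ j, (z j + t * y j) ^ α j with hf
  set ρ : ℝ := (m:ℝ) / ((m:ℝ) - 1) with hρ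
  have hρ0 : 0 < ρ := by positivity
  have hρ1 : ρ = 1 + 1 / ((m:ℝ) - 1) := by rw [hρ]; field_simp; ring
  have hfd : Differentiable ℂ f := by rw [hf]; fun_prop
  have hbound : ∀ t ∈ Metric.sphere (0:ℂ) (1 / ((m:ℝ) - 1)), ‖f t‖ ≤ ρ ^ m * M := by
    intro t ht
    have ht' : ‖t‖ = 1 / ((m:ℝ) - 1) := by simpa using ht
    have h1 : ∀ j, ‖(z j + t * y j) / ρ‖ ≤ 1 := by
      intro j
      rw [norm_div, Complex.norm_real, Real.norm_eq_abs, abs_of_pos hρ0, div_le_one hρ0]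
      refine (norm_add_le _ _).trans ?_
      rw [norm_mul, hρ1, ht']
      have : 1 / ((m:ℝ) - 1) * ‖y j‖ ≤ 1 / ((m:ℝ) - 1) * 1 :=
        mul_le_mul_of_nonneg_left (hy j) (by positivity)
      linarith [hz j]
    have h2 := hM _ h1
    have h3 : f t = (ρ:ℂ) ^ m * ∑ α ∈ Λ, c α * ∏ j, ((z j + t * y j) / ρ) ^ α j := by
      rw [hf, Finset.mul_sum]
      refine Finset.sum_congr rfl fun α hα => ?_
      have hρC : (ρ:ℂ) ≠ 0 := by exact_mod_cast hρ0.ne'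
      simp only [div_pow, Finset.prod_div_distrib]
      rw [Finset.prod_pow_eq_pow_sum, hΛ α hα]
      field_simp
    rw [h3, norm_mul, norm_pow, Complex.norm_real, Real.norm_eq_abs, abs_of_pos hρ0]
    exact mul_le_mul_of_nonneg_left h2 (by positivity)
  have h := Complex.norm_deriv_le_of_forall_mem_sphere_norm_le (by positivity)
    hfd.diffContOnCl hbound
  rw [hd.deriv, ← Complex.ofReal_sum, Complex.norm_real, Real.norm_eq_abs,
    abs_of_nonneg (by positivity)] at h
  refine h.trans (le_of_eq ?_)
  obtain ⟨k, rfl⟩ : ∃ k, m = k + 1 := ⟨m - 1, by omega⟩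
  rw [Nat.add_sub_cancel, pow_succ, div_div_eq_mul_div, div_one]
  have : ρ * (((k + 1 : ℕ) : ℝ) - 1) = ((k + 1 : ℕ) : ℝ) := by rw [hρ]; field_simp
  calc ρ ^ k * ρ * M * (((k + 1 : ℕ) : ℝ) - 1) = (ρ * (((k + 1 : ℕ) : ℝ) - 1)) * ρ ^ k * M := by ring
    _ = _ := by rw [this]

lemma bh_multinomial {N m : ℕ} (Λ : Finset (Fin N → ℕ)) (hΛ : ∀ α ∈ Λ, ∑ j, α j = m)
    (A : Fin N → ℝ) (hA : ∀ n, 0 < A n) : ∑ α ∈ Λ, ∏ n, A n ^ α n ≤ (∑ n, A n) ^ m := by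
  rw [Finset.sum_pow_eq_sum_piAntidiag]
  have hp : ∀ α : Fin N → ℕ, 0 ≤ ∏ n, A n ^ α n := fun α =>
    Finset.prod_nonneg fun n _ => (pow_pos (hA n) _).le
  calc ∑ α ∈ Λ, ∏ n, A n ^ α n ≤ ∑ α ∈ Λ, (Nat.multinomial univ α : ℝ) * ∏ n, A n ^ α n := by
        refine Finset.sum_le_sum fun α _ => le_mul_of_one_le_left (hp α) ?_
        exact_mod_cast Nat.multinomial_pos _ _
    _ ≤ _ := by
        refine Finset.sum_le_sum_of_subset_of_nonneg ?_
          fun α _ _ => mul_nonneg (Nat.cast_nonneg _) (hp α)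
        intro α hα
        simp [hΛ α hα]

lemma bh_blei_pos {N m : ℕ} (hm : 2 ≤ m) (Λ : Finset (Fin N → ℕ))
    (hΛ : ∀ α ∈ Λ, ∑ j, α j = m) (w : (Fin N → ℕ) → ℝ) (hw : ∀ α, 0 ≤ w α)
    (A : Fin N → ℝ) (hA : ∀ n, 0 < A n)
    (h : ∀ n, ∑ α ∈ Λ, w α ^ 2 * α n ≤ A n ^ 2 / 2) :
    (∑ α ∈ Λ, w α ^ ((2 * m : ℝ) / (m + 1))) ^ (((m : ℝ) + 1) / (2 * m))
      ≤ Real.sqrt ((∑ n, A n) ^ 2 / (2 * m)) := by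
  have hm0 : (0:ℝ) < m := by have : 0 < m := by omega
                             exact_mod_cast this
  set S := ∑ n, A n with hS
  have hS0 : 0 ≤ S := Finset.sum_nonneg fun n _ => (hA n).le
  let a : (Fin N → ℕ) → ℝ := fun α => ∏ n, A n ^ α n
  have ha : ∀ α, 0 < a α := fun α => Finset.prod_pos fun n _ => pow_pos (hA n) _
  let B : (Fin N → ℕ) → ℝ := fun α => a α ^ (-(1 / m : ℝ))
  have hB : ∀ α, 0 < B α := fun α => Real.rpow_pos_of_pos (ha α) _
  have hBle : ∀ α ∈ Λ, B α ≤ ∑ n, (α n / m : ℝ) * (A n)⁻¹ := by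
    intro α hα
    have h1 := Real.geom_mean_le_arith_mean_weighted univ (fun n => (α n / m : ℝ))
      (fun n => (A n)⁻¹) (fun n _ => by positivity) (by
        rw [← Finset.sum_div, ← Nat.cast_sum, hΛ α hα, div_self hm0.ne'])
      (fun n _ => (inv_pos.mpr (hA n)).le)
    refine le_trans (le_of_eq ?_) h1
    simp only [B, a]
    rw [← Real.finsetProd_rpow _ _ fun n _ => (pow_pos (hA n) _).le]
    refine Finset.prod_congr rfl fun n _ => ?_
    rw [← Real.rpow_natCast, ← Real.rpow_mul (hA n).le, Real.inv_rpow (hA n).le,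
      ← Real.rpow_neg (hA n).le]
    congr 1
    ring
  have hconj : (((m:ℝ) + 1) / m).HolderConjugate ((m:ℝ) + 1) := by
    rw [Real.holderConjugate_iff]
    constructor
    · rw [lt_div_iff₀ hm0]; linarith
    · field_simp
  have hH := Real.inner_le_Lp_mul_Lq_of_nonneg Λ hconj
    (f := fun α => (w α ^ 2 * B α) ^ ((m:ℝ) / (m + 1)))
    (g := fun α => a α ^ (1 / ((m:ℝ) + 1)))
    (fun α _ => Real.rpow_nonneg (mul_nonneg (sq_nonneg _) (hB α).le) _)
    (fun α _ => Real.rpow_nonneg (ha α).le _)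
  have e1 : ∀ α, (w α ^ 2 * B α) ^ ((m:ℝ) / (m + 1)) * a α ^ (1 / ((m:ℝ) + 1))
      = w α ^ ((2 * m : ℝ) / (m + 1)) := by
    intro α
    rw [Real.mul_rpow (sq_nonneg _) (hB α).le, mul_assoc]
    have : B α ^ ((m:ℝ) / (m + 1)) * a α ^ (1 / ((m:ℝ) + 1)) = 1 := by
      simp only [B]
      rw [← Real.rpow_mul (ha α).le, ← Real.rpow_add (ha α)]
      rw [show -(1 / m : ℝ) * ((m:ℝ) / (m + 1)) + 1 / ((m:ℝ) + 1) = 0 by field_simp; ring]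
      exact Real.rpow_zero _
    rw [this, mul_one, ← Real.rpow_natCast, ← Real.rpow_mul (hw α)]
    congr 1
    push_cast; ring
  have e2 : ∀ α, ((w α ^ 2 * B α) ^ ((m:ℝ) / (m + 1))) ^ (((m:ℝ) + 1) / m) = w α ^ 2 * B α := by
    intro α
    rw [← Real.rpow_mul (mul_nonneg (sq_nonneg _) (hB α).le)]
    rw [show (m:ℝ) / (m + 1) * (((m:ℝ) + 1) / m) = 1 by field_simp, Real.rpow_one]
  have e3 : ∀ α, (a α ^ (1 / ((m:ℝ) + 1))) ^ ((m:ℝ) + 1) = a α := by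
    intro α
    rw [← Real.rpow_mul (ha α).le]
    rw [show 1 / ((m:ℝ) + 1) * ((m:ℝ) + 1) = 1 by field_simp, Real.rpow_one]
  simp only [e1, e2, e3] at hH
  have h1 : ∑ α ∈ Λ, w α ^ 2 * B α ≤ S / (2 * m) := by
    calc ∑ α ∈ Λ, w α ^ 2 * B α
        ≤ ∑ α ∈ Λ, w α ^ 2 * ∑ n, (α n / m : ℝ) * (A n)⁻¹ :=
          Finset.sum_le_sum fun α hα => mul_le_mul_of_nonneg_left (hBle α hα) (sq_nonneg _)
      _ = ∑ n, (∑ α ∈ Λ, w α ^ 2 * α n) * ((A n)⁻¹ / m) := by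
          simp only [Finset.mul_sum, Finset.sum_mul]
          rw [Finset.sum_comm]
          refine Finset.sum_congr rfl fun n _ => Finset.sum_congr rfl fun α _ => ?_
          ring
      _ ≤ ∑ n, (A n ^ 2 / 2) * ((A n)⁻¹ / m) :=
          Finset.sum_le_sum fun n _ => mul_le_mul_of_nonneg_right (h n)
            (div_nonneg (inv_pos.mpr (hA n)).le hm0.le)
      _ = S / (2 * m) := by
          rw [hS, Finset.sum_div]
          refine Finset.sum_congr rfl fun n _ => ?_
          have := (hA n).ne'
          field_simp
  have h2 := bh_multinomial Λ hΛ A hA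
  have h3 : ∑ α ∈ Λ, w α ^ ((2 * m : ℝ) / (m + 1))
      ≤ (S ^ 2 / (2 * m)) ^ ((m:ℝ) / (m + 1)) := by
    refine hH.trans ?_
    calc _ ≤ (S / (2 * m)) ^ (1 / (((m:ℝ) + 1) / m)) * (S ^ m) ^ (1 / ((m:ℝ) + 1)) := by
          gcongr
          · exact Real.rpow_nonneg (Finset.sum_nonneg fun α _ => (ha α).le) _
          · exact Finset.sum_nonneg fun α _ => mul_nonneg (sq_nonneg _) (hB α).le
          · exact Finset.sum_nonneg fun α _ => (ha α).le
      _ = _ := by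
          rw [← Real.rpow_natCast S m, ← Real.rpow_mul hS0, one_div_div, mul_one_div,
            ← Real.mul_rpow (by positivity) hS0]
          congr 1
          ring
  calc _ ≤ ((S ^ 2 / (2 * m)) ^ ((m:ℝ) / (m + 1))) ^ (((m : ℝ) + 1) / (2 * m)) :=
        Real.rpow_le_rpow (Finset.sum_nonneg fun α _ => Real.rpow_nonneg (hw α) _) h3
          (by positivity)
    _ = _ := by
        rw [← Real.rpow_mul (by positivity), Real.sqrt_eq_rpow]
        congr 1
        field_simp

lemma bh_blei {N m : ℕ} (hm : 2 ≤ m) (Λ : Finset (Fin N → ℕ))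
    (hΛ : ∀ α ∈ Λ, ∑ j, α j = m) (w : (Fin N → ℕ) → ℝ) (hw : ∀ α, 0 ≤ w α)
    (D : Fin N → ℝ) (hD : ∀ n, 0 ≤ D n)
    (h : ∀ n, ∑ α ∈ Λ, w α ^ 2 * α n ≤ D n ^ 2 / 2) :
    (∑ α ∈ Λ, w α ^ ((2 * m : ℝ) / (m + 1))) ^ (((m : ℝ) + 1) / (2 * m))
      ≤ Real.sqrt ((∑ n, D n) ^ 2 / (2 * m)) := by
  have hc : Continuous fun ε : ℝ => Real.sqrt ((∑ n, (D n + ε)) ^ 2 / (2 * m)) := by fun_prop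
  have ht : Filter.Tendsto (fun ε : ℝ => Real.sqrt ((∑ n, (D n + ε)) ^ 2 / (2 * m)))
      (nhdsWithin 0 (Set.Ioi 0)) (nhds (Real.sqrt ((∑ n, D n) ^ 2 / (2 * m)))) := by
    have := (hc.tendsto 0).mono_left (nhdsWithin_le_nhds (s := Set.Ioi (0:ℝ)))
    simpa using this
  refine ge_of_tendsto ht ?_
  filter_upwards [self_mem_nhdsWithin] with ε hε
  have hε' : 0 < ε := hε
  refine bh_blei_pos hm Λ hΛ w hw _ (fun n => by linarith [hD n]) fun n => (h n).trans ?_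
  have := hD n
  gcongr
  linarith

lemma bh_const {m : ℕ} (hm : 2 ≤ m) :
    Real.sqrt ((m:ℝ) / 2) ≤ (m : ℝ) ^ (((m : ℝ) - 1) / (2 * m)) := by
  have hm0 : (0:ℝ) < m := by have : 0 < m := by omega
                             exact_mod_cast this
  rw [show ((m : ℝ) - 1) / (2 * m) = (1 - 1 / m) * (1 / 2) by field_simp, Real.rpow_mul hm0.le,
    Real.sqrt_eq_rpow]
  refine Real.rpow_le_rpow (by positivity) ?_ (by norm_num)
  rw [Real.rpow_sub hm0, Real.rpow_one]
  have h2 : (m:ℝ) ^ (1 / (m:ℝ)) ≤ 2 := by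
    have h3 : (m:ℝ) ≤ 2 ^ m := by exact_mod_cast (Nat.lt_two_pow_self).le
    calc (m:ℝ) ^ (1 / (m:ℝ)) ≤ ((2:ℝ) ^ m) ^ (1 / (m:ℝ)) :=
          Real.rpow_le_rpow hm0.le h3 (by positivity)
      _ = 2 := by
          rw [one_div]; exact Real.pow_rpow_inv_natCast (by norm_num) (by omega)
  have h4 : 0 < (m:ℝ) ^ (1 / (m:ℝ)) := Real.rpow_pos_of_pos hm0 _
  gcongr

lemma bh_energy {N : ℕ} (Λ : Finset (Fin N → ℕ)) (c : (Fin N → ℕ) → ℂ) (n : Fin N) :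
    ∑ α ∈ Λ, (‖c α‖ / Real.sqrt (∏ j, ((α j : ℝ) + 1))) ^ 2 * α n ≤
      (∫ x, ‖bhD Λ c n (fun j => bhE (x j))‖
        ∂(MeasureTheory.Measure.pi fun _ : Fin N => bhMu)) ^ 2 / 2 := by
  classical
  have h := bh_torus_family (Λ.filter fun α => α n ≠ 0)
    (fun α => Function.update α n (α n - 1)) (by
      intro α hα β hβ hab
      simp only [Finset.coe_filter, Set.mem_setOf_eq] at hα hβ
      funext j
      have hj := congrFun hab j
      rcases eq_or_ne j n with rfl | hne
      · simp at hj
        omega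
      · simpa [hne] using hj) (fun α => c α * (α n : ℂ))
  have hD : ∀ x : Fin N → AddCircle (1:ℝ), bhD Λ c n (fun j => bhE (x j))
      = ∑ α ∈ Λ.filter (fun α => α n ≠ 0), c α * (α n : ℂ) *
        ∏ j, bhE (x j) ^ (Function.update α n (α n - 1) j) := by
    intro x
    unfold bhD
    symm
    apply Finset.sum_filter_of_ne
    intro α _ hne h0
    apply hne
    simp [h0]
  simp only [hD]
  rw [le_div_iff₀ (by norm_num)]
  refine le_trans ?_ h
  rw [Finset.sum_mul, Finset.sum_filter]
  refine Finset.sum_le_sum fun α _ => ?_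
  split_ifs with h0
  · obtain ⟨k, hk⟩ := Nat.exists_eq_succ_of_ne_zero h0
    rw [div_pow, Real.sq_sqrt (by positivity)]
    rw [← Finset.mul_prod_erase univ _ (Finset.mem_univ n),
      ← Finset.mul_prod_erase univ (fun j => ((Function.update α n (α n - 1) j : ℕ) : ℝ) + 1)
        (Finset.mem_univ n)]
    have : ∏ x ∈ univ.erase n, (((Function.update α n (α n - 1) x : ℕ) : ℝ) + 1)
        = ∏ x ∈ univ.erase n, ((α x : ℝ) + 1) := by
      refine Finset.prod_congr rfl fun x hx => ?_
      rw [Function.update_of_ne (Finset.ne_of_mem_erase hx)]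
    rw [this]
    set Q := ∏ x ∈ univ.erase n, ((α x : ℝ) + 1) with hQ
    have hQ0 : 0 < Q := Finset.prod_pos fun x _ => by positivity
    rw [Function.update_self, hk]
    simp only [Nat.succ_eq_add_one, Nat.add_sub_cancel, norm_mul, Complex.norm_natCast]
    push_cast
    rw [show ‖c α‖ ^ 2 / (((k:ℝ) + 1 + 1) * Q) * ((k:ℝ) + 1) * 2
      = (‖c α‖ ^ 2 * ((k:ℝ) + 1) / Q) * (2 / ((k:ℝ) + 1 + 1)) by field_simp]
    rw [show (‖c α‖ * ((k:ℝ) + 1)) ^ 2 / (((k:ℝ) + 1) * Q)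
      = (‖c α‖ ^ 2 * ((k:ℝ) + 1) / Q) * 1 by field_simp]
    refine mul_le_mul_of_nonneg_left ?_ (by positivity)
    rw [div_le_one (by positivity)]
    have := Nat.cast_nonneg (α := ℝ) k
    linarith
  · simp only [not_not] at h0
    simp [h0]

theorem weighted_bohnenblust_hille (m N : ℕ) (hm : 2 ≤ m) (hN : 1 ≤ N)
    (Λ : Finset (Fin N → ℕ)) (hΛ : ∀ α ∈ Λ, ∑ j, α j = m)
    (c : (Fin N → ℕ) → ℂ) :
    (∑ α ∈ Λ, (‖c α‖ / Real.sqrt (∏ j, ((α j : ℝ) + 1)))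
        ^ ((2 * m : ℝ) / (m + 1))) ^ (((m : ℝ) + 1) / (2 * m))
      ≤ (m : ℝ) ^ (((m : ℝ) - 1) / (2 * m)) * ((m : ℝ) / ((m : ℝ) - 1)) ^ (m - 1) *
        ⨆ z ∈ {z : Fin N → ℂ | ∀ j, ‖z j‖ ≤ 1},
          ‖∑ α ∈ Λ, c α * ∏ j, z j ^ α j‖ := by
  set M := ⨆ z ∈ {z : Fin N → ℂ | ∀ j, ‖z j‖ ≤ 1}, ‖∑ α ∈ Λ, c α * ∏ j, z j ^ α j‖ with hMdef
  have hle : ∀ z : Fin N → ℂ, (∀ j, ‖z j‖ ≤ 1) →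
      ‖∑ α ∈ Λ, c α * ∏ j, z j ^ α j‖ ≤ ∑ α ∈ Λ, ‖c α‖ := by
    intro z hz
    refine (norm_sum_le _ _).trans (Finset.sum_le_sum fun α _ => ?_)
    rw [norm_mul, norm_prod]
    refine mul_le_of_le_one_right (norm_nonneg _) ?_
    refine Finset.prod_le_one (fun j _ => norm_nonneg _) fun j _ => ?_
    rw [norm_pow]
    exact pow_le_one₀ (norm_nonneg _) (hz j)
  have hbdd : BddAbove (Set.range fun z : Fin N → ℂ =>
      ⨆ (_ : z ∈ {z : Fin N → ℂ | ∀ j, ‖z j‖ ≤ 1}), ‖∑ α ∈ Λ, c α * ∏ j, z j ^ α j‖) := by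
    refine ⟨∑ α ∈ Λ, ‖c α‖, ?_⟩
    rintro _ ⟨z, rfl⟩
    exact Real.iSup_le (fun hz => hle z hz) (by positivity)
  have hM : ∀ z : Fin N → ℂ, (∀ j, ‖z j‖ ≤ 1) → ‖∑ α ∈ Λ, c α * ∏ j, z j ^ α j‖ ≤ M := by
    intro z hz
    refine le_trans (le_of_eq ?_) (le_ciSup hbdd z)
    haveI : Nonempty (z ∈ {z : Fin N → ℂ | ∀ j, ‖z j‖ ≤ 1}) := ⟨hz⟩
    exact ciSup_const.symm
  have hM0 : 0 ≤ M := (norm_nonneg _).trans (hM 0 (by simp))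
  have hm' : (2:ℝ) ≤ m := by exact_mod_cast hm
  have hm1 : (0:ℝ) < (m:ℝ) - 1 := by linarith
  have hm0 : (0:ℝ) < m := by linarith
  let D : Fin N → ℝ := fun n => ∫ x, ‖bhD Λ c n (fun j => bhE (x j))‖
        ∂(MeasureTheory.Measure.pi fun _ : Fin N => bhMu)
  have hD0 : ∀ n, 0 ≤ D n := fun n => MeasureTheory.integral_nonneg fun x => norm_nonneg _
  have h1 := bh_blei hm Λ hΛ (fun α => ‖c α‖ / Real.sqrt (∏ j, ((α j : ℝ) + 1)))
    (fun α => by positivity) D hD0 (bh_energy Λ c)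
  refine h1.trans ?_
  have hint : ∀ n, MeasureTheory.Integrable
      (fun x : Fin N → AddCircle (1:ℝ) => ‖bhD Λ c n (fun j => bhE (x j))‖)
      (MeasureTheory.Measure.pi fun _ : Fin N => bhMu) := by
    intro n
    apply bh_integrable
    unfold bhD
    have := bhE_cont
    fun_prop
  set ρ : ℝ := ((m : ℝ) / ((m : ℝ) - 1)) ^ (m - 1) with hρ
  have hρ0 : 0 ≤ ρ := by positivity
  have hDsum : ∑ n, D n ≤ m * ρ * M := by
    simp only [D]
    rw [← MeasureTheory.integral_finsetSum _ fun n _ => hint n]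
    calc _ ≤ ∫ _x, (m * ρ * M : ℝ) ∂(MeasureTheory.Measure.pi fun _ : Fin N => bhMu) := by
          refine MeasureTheory.integral_mono
            (MeasureTheory.integrable_finsetSum _ fun n _ => hint n)
            (MeasureTheory.integrable_const _) fun x => ?_
          exact bh_bernstein hm Λ hΛ c M hM _ fun j => (bhE_norm _).le
      _ = m * ρ * M := by simp
  have hDs0 : 0 ≤ ∑ n, D n := Finset.sum_nonneg fun n _ => hD0 n
  calc Real.sqrt ((∑ n, D n) ^ 2 / (2 * m))
      ≤ Real.sqrt ((m * ρ * M) ^ 2 / (2 * m)) := by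
        apply Real.sqrt_le_sqrt
        gcongr
    _ = Real.sqrt ((m:ℝ) / 2 * (ρ * M) ^ 2) := by
        congr 1
        field_simp
    _ = Real.sqrt ((m:ℝ) / 2) * (ρ * M) := by
        rw [Real.sqrt_mul (by positivity), Real.sqrt_sq (by positivity)]
    _ ≤ (m : ℝ) ^ (((m : ℝ) - 1) / (2 * m)) * (ρ * M) :=
        mul_le_mul_of_nonneg_right (bh_const hm) (by positivity)
    _ = _ := by ring
end

section
/- Let m, M, N ≥ 1 and let α ∈ ℕ₀^N be a multi-index with |α| = m such that at most M of the coordinates α_j are nonzero (i.e. var(α) ≤ M). Then ∏_{j=1}^N (α_j + 1) ≤ (m/M + 1)^M. -/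
open Finset

/-- If `α ∈ ℕ₀^N` is a multi-index with `|α| = m` involving at most `M` variables
(`var(α) = card{j : α_j ≠ 0} ≤ M`), then `∏_j (α_j + 1) ≤ (m/M + 1)^M`. -/
theorem prod_add_one_le_of_var_le (m M N : ℕ) (hm : 1 ≤ m) (hM : 1 ≤ M) (hN : 1 ≤ N)
    (α : Fin N → ℕ) (hα : ∑ j, α j = m)
    (hvar : (Finset.univ.filter fun j => α j ≠ 0).card ≤ M) :
    ∏ j, ((α j : ℝ) + 1) ≤ ((m : ℝ) / M + 1) ^ M := by
  set S := Finset.univ.filter fun j => α j ≠ 0 with hS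
  have hM0 : (0 : ℝ) < M := by exact_mod_cast hM
  have hk : (S.card : ℝ) ≤ M := by exact_mod_cast hvar
  obtain ⟨c, hc⟩ : ∃ c : ℝ, c = (m : ℝ) / M + 1 := ⟨_, rfl⟩
  have hc0 : 0 < c := by rw [hc]; positivity
  have hmc : (m : ℝ) = M * (c - 1) := by rw [hc]; field_simp; ring
  have hprod : ∏ j, ((α j : ℝ) + 1) = ∏ j ∈ S, ((α j : ℝ) + 1) := by
    symm
    apply Finset.prod_subset (Finset.subset_univ _)
    intro j _ hj
    have : α j = 0 := by simpa [hS] using hj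
    simp [this]
  have hsum : ∑ j ∈ S, (α j : ℝ) = m := by
    rw [← hα, Nat.cast_sum]
    apply Finset.sum_subset (Finset.subset_univ _)
    intro j _ hj
    have : α j = 0 := by simpa [hS] using hj
    simp [this]
  have hlog : 1 - c⁻¹ ≤ Real.log c := Real.one_sub_inv_le_log_of_pos hc0
  rw [← hc, hprod]
  have hpos : ∀ j ∈ S, (0 : ℝ) < (α j : ℝ) + 1 := fun j _ => by positivity
  rw [← Real.log_le_log_iff (Finset.prod_pos hpos) (by positivity),
    Real.log_prod (fun j hj => (hpos j hj).ne'), Real.log_pow]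
  have h1 : ∀ j ∈ S, Real.log ((α j : ℝ) + 1) ≤ α j * c⁻¹ + (Real.log c + c⁻¹ - 1) := by
    intro j hj
    have h := Real.log_le_sub_one_of_pos (div_pos (hpos j hj) hc0)
    rw [Real.log_div (hpos j hj).ne' hc0.ne', div_eq_mul_inv] at h
    linarith
  refine (Finset.sum_le_sum h1).trans ?_
  rw [Finset.sum_add_distrib, ← Finset.sum_mul, hsum, Finset.sum_const, nsmul_eq_mul, hmc]
  have h2 : (M : ℝ) * (c - 1) * c⁻¹ = M * (1 - c⁻¹) := by field_simp
  rw [h2]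
  nlinarith [mul_nonneg (sub_nonneg.2 hk) (sub_nonneg.2 hlog)]
end

section
/- Let m ≥ 2 and M, N ≥ 1, and set Λ_{N,M} = {α ∈ ℕ₀^N : |α| = m and var(α) ≤ M}. Then for all complex numbers (c_α)_{α ∈ Λ_{N,M}} one has (∑_{α ∈ Λ_{N,M}} |c_α|^{2m/(m+1)})^{(m+1)/(2m)} ≤ e · 2^{M/2} · m^{(M+1)/2} · sup_{z ∈ closed unit polydisc of ℂ^N} |∑_{α ∈ Λ_{N,M}} c_α z^α|. In particular the constant has polynomial growth in m and does not depend on N. -/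
open Finset

lemma bh_holder {κ ι : Type*} (s : Finset κ) (t : Finset ι) (f : ι → κ → ℝ)
    (hf : ∀ i ∈ t, ∀ a ∈ s, 0 ≤ f i a) (w : ι → ℝ) (hw : ∀ i ∈ t, 0 < w i) (hw1 : ∑ i ∈ t, w i = 1) :
    ∑ a ∈ s, ∏ i ∈ t, f i a ^ w i ≤ ∏ i ∈ t, (∑ a ∈ s, f i a) ^ w i := by
  have hS : ∀ i ∈ t, 0 ≤ ∑ a ∈ s, f i a := fun i hi => sum_nonneg (hf i hi)
  by_cases h0 : ∃ i ∈ t, ∑ a ∈ s, f i a = 0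
  · obtain ⟨i, hi, h⟩ := h0
    rw [sum_eq_zero_iff_of_nonneg (hf i hi)] at h
    rw [sum_eq_zero]
    · exact prod_nonneg fun i hi => Real.rpow_nonneg (hS i hi) _
    · intro a ha
      exact prod_eq_zero hi (by rw [h a ha, Real.zero_rpow (hw i hi).ne'])
  · push Not at h0
    have hpos : ∀ i ∈ t, 0 < ∑ a ∈ s, f i a := fun i hi => (hS i hi).lt_of_ne' (h0 i hi)
    have key : ∀ a ∈ s, ∏ i ∈ t, f i a ^ w i ≤
        (∏ i ∈ t, (∑ a ∈ s, f i a) ^ w i) * ∑ i ∈ t, w i * (f i a / ∑ a ∈ s, f i a) := by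
      intro a ha
      have h1 := Real.geom_mean_le_arith_mean_weighted t w (fun i => f i a / ∑ a ∈ s, f i a)
        (fun i hi => (hw i hi).le) hw1 (fun i hi => div_nonneg (hf i hi a ha) (hS i hi))
      have h2 : ∏ i ∈ t, f i a ^ w i = (∏ i ∈ t, (∑ a ∈ s, f i a) ^ w i) *
          ∏ i ∈ t, (f i a / ∑ a ∈ s, f i a) ^ w i := by
        rw [← prod_mul_distrib]
        refine prod_congr rfl fun i hi => ?_
        rw [← Real.mul_rpow (hS i hi) (div_nonneg (hf i hi a ha) (hS i hi)),
          mul_div_cancel₀ _ (h0 i hi)]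
      rw [h2]
      exact mul_le_mul_of_nonneg_left h1 (prod_nonneg fun i hi => Real.rpow_nonneg (hS i hi) _)
    refine (sum_le_sum key).trans ?_
    rw [← mul_sum, sum_comm]
    have : ∑ y ∈ t, ∑ x ∈ s, w y * (f y x / ∑ a ∈ s, f y a) = 1 := by
      rw [← hw1]
      refine sum_congr rfl fun i hi => ?_
      rw [← mul_sum, ← sum_div, div_self (h0 i hi), mul_one]
    rw [this, mul_one]

/-- Minkowski inequality in `ℓ²`. -/
lemma bh_minkowski_s6 {ι κ : Type*} [Fintype ι] [Fintype κ] (a : ι → κ → ℝ) :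
    ∑ j, (∑ l, a l j) ^ 2 ≤ (∑ l, √(∑ j, a l j ^ 2)) ^ 2 := by
  let v : ι → EuclideanSpace ℝ κ := fun l => WithLp.toLp 2 (a l)
  have h := norm_sum_le univ v
  have h1 : ∀ l, ‖v l‖ = √(∑ j, a l j ^ 2) := fun l => by
    simp [v, EuclideanSpace.norm_eq]
  have h2 : ‖∑ l, v l‖ ^ 2 = ∑ j, (∑ l, a l j) ^ 2 := by
    rw [EuclideanSpace.norm_sq_eq]
    simp [v]
  rw [← h2]
  simp only [h1] at h
  exact pow_le_pow_left₀ (norm_nonneg _) h 2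

noncomputable def bhS {ι : Type*} [Fintype ι] [DecidableEq ι] {m : ℕ} (k : Fin m)
    (x : (Fin m → ι) → ℝ) : ℝ := ∑ l, √(∑ i, if i k = l then x i ^ 2 else 0)

lemma bhS_nonneg {ι : Type*} [Fintype ι] [DecidableEq ι] {m : ℕ} (k : Fin m)
    (x : (Fin m → ι) → ℝ) : 0 ≤ bhS k x := sum_nonneg fun _ _ => Real.sqrt_nonneg _

lemma bh_sum_cons {ι : Type*} [Fintype ι] {R : Type*} [AddCommMonoid R] {m : ℕ} (f : (Fin (m + 1) → ι) → R) :
    ∑ i, f i = ∑ j, ∑ i' : Fin m → ι, f (Fin.cons j i') := by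
  rw [← (Fin.consEquiv (fun _ => ι)).sum_comp, Fintype.sum_prod_type]
  rfl

lemma bhS_zero {ι : Type*} [Fintype ι] [DecidableEq ι] {m : ℕ} 
    (x : (Fin (m + 1) → ι) → ℝ) : bhS 0 x = ∑ j, √(∑ i', x (Fin.cons j i') ^ 2) := by
  unfold bhS
  refine sum_congr rfl fun l _ => ?_
  rw [bh_sum_cons]
  simp only [Fin.cons_zero]
  congr 1
  rw [sum_eq_single l]
  · simp
  · intro b _ hb; simp [hb]
  · simp

lemma bhS_succ {ι : Type*} [Fintype ι] [DecidableEq ι] {m : ℕ} (k : Fin m)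
    (x : (Fin (m + 1) → ι) → ℝ) :
    ∑ j, (bhS k fun i' => x (Fin.cons j i')) ^ 2 ≤ bhS k.succ x ^ 2 := by
  unfold bhS
  refine (bh_minkowski_s6 (fun l j => √(∑ i : Fin m → ι, if i k = l then x (Fin.cons j i) ^ 2 else 0))).trans ?_
  apply le_of_eq
  congr 2
  funext l
  congr 1
  rw [bh_sum_cons]
  refine sum_congr rfl fun j _ => ?_
  rw [Real.sq_sqrt]
  · simp
  · exact sum_nonneg fun i _ => by split_ifs <;> positivity

theorem bh_blei_s6 {ι : Type*} [Fintype ι] [DecidableEq ι] (n : ℕ) (x : (Fin (n + 1) → ι) → ℝ)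
    (hx : ∀ i, 0 ≤ x i) :
    ∑ i, x i ^ (2 * (n + 1 : ℝ) / (n + 2)) ≤ ∏ k, bhS k x ^ (2 / (n + 2 : ℝ)) := by
  induction n with
  | zero =>
    simp only [Nat.cast_zero, zero_add]
    norm_num
    rw [bh_sum_cons]
    have := bhS_zero x
    simp only [Finset.univ_unique, sum_singleton, Real.sqrt_sq (hx _)] at this
    simp only [Finset.univ_unique, sum_singleton]
    exact this.ge.trans_eq (Fin.prod_univ_one (fun k : Fin 1 => bhS k x)).symm
  | succ n ih =>
    have hn3 : (0:ℝ) < n + 3 := by positivity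
    have hn2 : (0:ℝ) < n + 2 := by positivity
    rw [bh_sum_cons]
    have step1 : ∀ j : ι, ∑ i' : Fin (n + 1) → ι, x (Fin.cons j i') ^ (2 * ((n + 1 : ℕ) + 1 : ℝ) / ((n + 1 : ℕ) + 2)) ≤
        √(∑ i', x (Fin.cons j i') ^ 2) ^ (2 / (n + 3 : ℝ)) * ∏ k, ((bhS k fun i' => x (Fin.cons j i')) ^ 2) ^ (1 / (n + 3 : ℝ)) := by
      intro j
      set y : (Fin (n + 1) → ι) → ℝ := fun i' => x (Fin.cons j i') with hy
      have hy0 : ∀ i, 0 ≤ y i := fun i => hx _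
      have h := bh_holder univ (univ : Finset (Fin 2)) (![fun i => y i ^ (2 * (n + 1 : ℝ) / (n + 2)), fun i => y i ^ 2])
        (by
          intro i _ a _
          fin_cases i
          · exact Real.rpow_nonneg (hy0 a) _
          · exact pow_nonneg (hy0 a) _) ![(n + 2 : ℝ) / (n + 3), 1 / (n + 3)] (by
          intro i _
          fin_cases i
          · simp; positivity
          · simp; positivity) (by simp; field_simp; ring)
      simp only [Fin.prod_univ_two, Matrix.cons_val_zero, Matrix.cons_val_one] at h
      have e1 : ∀ i, (y i ^ (2 * (n + 1 : ℝ) / (n + 2))) ^ ((n + 2 : ℝ) / (n + 3)) * (y i ^ 2) ^ (1 / (n + 3 : ℝ))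
          = y i ^ (2 * ((n + 1 : ℕ) + 1 : ℝ) / ((n + 1 : ℕ) + 2)) := by
        intro i
        rw [← Real.rpow_natCast, ← Real.rpow_mul (hy0 i), ← Real.rpow_mul (hy0 i), ← Real.rpow_add_of_nonneg (hy0 i)]
        · congr 1
          push_cast
          field_simp
          ring
        · positivity
        · positivity
      simp only [e1] at h
      refine h.trans ?_
      rw [mul_comm]
      have hB : (∑ i, y i ^ 2) ^ (1 / (n + 3 : ℝ)) = √(∑ i', y i' ^ 2) ^ (2 / (n + 3 : ℝ)) := by
        rw [Real.sqrt_eq_rpow, ← Real.rpow_mul (sum_nonneg fun i _ => sq_nonneg _)]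
        congr 1
        field_simp
      rw [hB]
      refine mul_le_mul_of_nonneg_left ?_ (Real.rpow_nonneg (Real.sqrt_nonneg _) _)
      refine (Real.rpow_le_rpow (sum_nonneg fun i _ => Real.rpow_nonneg (hy0 i) _) (ih y hy0) (by positivity)).trans (le_of_eq ?_)
      rw [← Real.finsetProd_rpow _ _ (fun k _ => Real.rpow_nonneg (bhS_nonneg k y) _)]
      refine prod_congr rfl fun k _ => ?_
      rw [← Real.rpow_mul (bhS_nonneg k y), ← Real.rpow_natCast, ← Real.rpow_mul (bhS_nonneg k y)]
      congr 1
      push_cast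
      field_simp
    refine (sum_le_sum fun j _ => step1 j).trans ?_
    have h := bh_holder (univ : Finset ι) (univ : Finset (Fin (n + 2)))
      (Fin.cons (fun j => √(∑ i', x (Fin.cons j i') ^ 2)) (fun k j => (bhS k fun i' => x (Fin.cons j i')) ^ 2))
      (by
        intro i _ a _
        refine Fin.cases ?_ (fun k => ?_) i
        · simp
        · simp; positivity)
      (Fin.cons (2 / (n + 3 : ℝ)) (fun _ => 1 / (n + 3 : ℝ)))
      (by
        intro i _
        refine Fin.cases ?_ (fun k => ?_) i
        · simp; positivity
        · simp; positivity)
      (by simp [Fin.sum_univ_succ]; field_simp; ring)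
    simp only [Fin.prod_univ_succ (n := n + 1), Fin.cons_zero, Fin.cons_succ] at h
    refine h.trans ?_
    rw [Fin.prod_univ_succ (n := n + 1), bhS_zero]
    have e3 : ((n + 1 : ℕ) + 2 : ℝ) = n + 3 := by push_cast; ring
    rw [e3]
    refine mul_le_mul_of_nonneg_left ?_ (Real.rpow_nonneg (sum_nonneg fun _ _ => Real.sqrt_nonneg _) _)
    refine prod_le_prod (fun k _ => Real.rpow_nonneg (sum_nonneg fun _ _ => sq_nonneg _) _) fun k _ => ?_
    refine (Real.rpow_le_rpow (sum_nonneg fun _ _ => sq_nonneg _) (bhS_succ k x) (by positivity)).trans (le_of_eq ?_)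
    rw [← Real.rpow_natCast, ← Real.rpow_mul (bhS_nonneg _ x)]
    congr 1
    push_cast
    field_simp

/-- Taylor coefficient. -/
noncomputable def bhT (g : ℂ → ℂ) (k : ℕ) : ℂ := iteratedDeriv k g 0 / k.factorial

lemma bh_circle_cont {E : Type*} [NormedAddCommGroup E] {f : ℂ → E} (hf : ContinuousOn f (Metric.sphere 0 1)) :
    CircleIntegrable f 0 1 := by
  apply ContinuousOn.circleIntegrable zero_le_one hf

/-- Cauchy's formula as a circle average. -/
lemma bhT_eq (g : ℂ → ℂ) (hg : DiffContOnCl ℂ g (Metric.ball 0 1)) (k : ℕ) :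
    bhT g k = Real.circleAverage (fun z => (z ^ k)⁻¹ * g z) 0 1 := by
  have h := hg.circleIntegral_one_div_sub_center_pow_smul one_pos k
  rw [Real.circleAverage_eq_circleIntegral one_ne_zero]
  have e : (fun z : ℂ => (z - 0)⁻¹ • ((z ^ k)⁻¹ * g z)) = fun z => (1 / (z - 0) ^ (k + 1)) • g z := by
    funext z
    simp only [sub_zero, smul_eq_mul, one_div, pow_succ, mul_inv]
    ring
  rw [e, h, bhT]
  have : (2 * Real.pi * Complex.I : ℂ) ≠ 0 := Complex.two_pi_I_ne_zero
  simp only [smul_eq_mul]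
  field_simp

lemma bhT_mul (g h : ℂ → ℂ) (hg : DiffContOnCl ℂ g (Metric.ball 0 1))
    (hh : DiffContOnCl ℂ h (Metric.ball 0 1)) (k : ℕ) :
    bhT (g * h) k = ∑ p ∈ antidiagonal k, bhT g p.1 * bhT h p.2 := by
  have h0 : Metric.ball (0:ℂ) 1 ∈ nhds 0 := Metric.ball_mem_nhds _ one_pos
  have hg' : ContDiffAt ℂ k g 0 := (hg.differentiableOn.analyticAt h0).contDiffAt
  have hh' : ContDiffAt ℂ k h 0 := (hh.differentiableOn.analyticAt h0).contDiffAt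
  unfold bhT
  rw [iteratedDeriv_mul hg' hh', Finset.Nat.sum_antidiagonal_eq_sum_range_succ
    (fun i j => iteratedDeriv i g 0 / i.factorial * (iteratedDeriv j h 0 / j.factorial)), sum_div]
  refine sum_congr rfl fun i hi => ?_
  rw [Nat.cast_choose ℂ (Nat.lt_succ_iff.mp (mem_range.mp hi))]
  have a1 : (k.factorial : ℂ) ≠ 0 := by exact_mod_cast k.factorial_ne_zero
  have a2 : (i.factorial : ℂ) ≠ 0 := by exact_mod_cast i.factorial_ne_zero
  have a3 : ((k-i).factorial : ℂ) ≠ 0 := by exact_mod_cast (k-i).factorial_ne_zero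
  field_simp

lemma bh_avg_ofReal (f : ℂ → ℝ) (hf : ContinuousOn f (Metric.sphere 0 1)) :
    ((Real.circleAverage f 0 1 : ℝ) : ℂ) = Real.circleAverage (fun z => (f z : ℂ)) 0 1 := by
  have := Complex.ofRealCLM.circleAverage_comp_comm (bh_circle_cont hf)
  exact this.symm

lemma bh_avg_pow (k l : ℕ) : Real.circleAverage (fun z : ℂ => (z ^ k)⁻¹ * z ^ l) 0 1 = if l = k then 1 else 0 := by
  have hd : DiffContOnCl ℂ (fun z : ℂ => z ^ l) (Metric.ball 0 1) :=
    (differentiable_pow l).diffContOnCl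
  rw [← bhT_eq _ hd, bhT]
  rw [iteratedDeriv_fun_pow_zero]
  split_ifs with h1 h2 h2
  · subst h1; exact div_self (by exact_mod_cast k.factorial_ne_zero)
  · exact absurd h1.symm h2
  · exact absurd h2.symm h1
  · simp

/-- Bessel's inequality. -/
lemma bh_bessel (g : ℂ → ℂ) (hg : DiffContOnCl ℂ g (Metric.ball 0 1)) (n : ℕ) :
    ∑ k ∈ range n, ‖bhT g k‖ ^ 2 ≤ Real.circleAverage (fun z => ‖g z‖ ^ 2) 0 1 := by
  have hgc : ContinuousOn g (Metric.sphere 0 1) :=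
    hg.continuousOn_ball.mono Metric.sphere_subset_closedBall
  set c := bhT g with hc
  let p : ℂ → ℂ := fun z => ∑ k ∈ range n, c k * z ^ k
  let q : ℂ → ℂ := fun z => ∑ k ∈ range n, (starRingEnd ℂ) (c k) * (z ^ k)⁻¹
  have hz0 : ∀ z ∈ Metric.sphere (0:ℂ) 1, z ≠ 0 := by
    rintro z hz rfl; simp at hz
  have hinv : ∀ k, ContinuousOn (fun z : ℂ => (z ^ k)⁻¹) (Metric.sphere 0 1) := fun k =>
    (continuous_pow k).continuousOn.inv₀ fun z hz => pow_ne_zero _ (hz0 z hz)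
  have hpq : ∀ z ∈ Metric.sphere (0:ℂ) 1, (starRingEnd ℂ) (p z) = q z := by
    intro z hz
    simp only [p, q, map_sum, map_mul, map_pow]
    refine sum_congr rfl fun k _ => ?_
    rw [← inv_pow, Complex.inv_eq_conj (by simpa using hz)]
  have hpc : ContinuousOn p (Metric.sphere 0 1) := by
    apply Continuous.continuousOn; fun_prop
  have hqc : ContinuousOn q (Metric.sphere 0 1) :=
    continuousOn_finsetSum _ fun k _ => continuousOn_const.mul (hinv k)
  -- averages
  have A1 : Real.circleAverage (fun z => g z * q z) 0 1 = ((∑ k ∈ range n, ‖c k‖ ^ 2 : ℝ) : ℂ) := by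
    have : (fun z => g z * q z) = fun z => ∑ k ∈ range n, (starRingEnd ℂ) (c k) • ((z ^ k)⁻¹ * g z) := by
      funext z
      simp only [q, mul_sum, smul_eq_mul]
      exact sum_congr rfl fun k _ => by ring
    rw [this, Real.circleAverage_fun_sum]
    · push_cast
      refine sum_congr rfl fun k _ => ?_
      rw [Real.circleAverage_fun_smul, ← bhT_eq g hg, smul_eq_mul, ← hc, mul_comm, Complex.mul_conj,
        Complex.normSq_eq_norm_sq]
      push_cast; rfl
    · intro k _
      exact bh_circle_cont (continuousOn_const.fun_smul ((hinv k).fun_mul hgc))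
  have A2 : Real.circleAverage (fun z => p z * q z) 0 1 = ((∑ k ∈ range n, ‖c k‖ ^ 2 : ℝ) : ℂ) := by
    have : (fun z => p z * q z) = fun z => ∑ k ∈ range n, ∑ l ∈ range n,
        ((starRingEnd ℂ) (c k) * c l) • ((z ^ k)⁻¹ * z ^ l) := by
      funext z
      simp only [q, p, mul_sum, sum_mul, smul_eq_mul]
      exact sum_congr rfl fun k _ => sum_congr rfl fun l _ => by ring
    rw [this, Real.circleAverage_fun_sum]
    · push_cast
      refine sum_congr rfl fun k hk => ?_
      rw [Real.circleAverage_fun_sum]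
      · simp_rw [Real.circleAverage_fun_smul, bh_avg_pow, smul_eq_mul, mul_ite, mul_one, mul_zero]
        rw [sum_ite_eq', if_pos hk, mul_comm, Complex.mul_conj,
          Complex.normSq_eq_norm_sq]
        push_cast; rfl
      · intro l _
        exact bh_circle_cont (continuousOn_const.fun_smul ((hinv k).fun_mul (continuous_pow l).continuousOn))
    · intro k _
      exact bh_circle_cont (continuousOn_finsetSum _ fun l _ => continuousOn_const.fun_smul ((hinv k).fun_mul (continuous_pow l).continuousOn))
  have hre : ∀ f : ℂ → ℂ, ContinuousOn f (Metric.sphere 0 1) →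
      Real.circleAverage (fun z => (f z).re) 0 1 = (Real.circleAverage f 0 1).re := fun f hf =>
    Complex.reCLM.circleAverage_comp_comm (bh_circle_cont hf)
  have B1 := hre _ (hgc.fun_mul hqc)
  have B2 := hre _ (hpc.fun_mul hqc)
  rw [A1, Complex.ofReal_re] at B1
  rw [A2, Complex.ofReal_re] at B2
  have I1 : CircleIntegrable (fun z => ‖g z‖ ^ 2) 0 1 := bh_circle_cont (hgc.norm.pow 2)
  have I2 : CircleIntegrable (fun z => (g z * q z).re) 0 1 := bh_circle_cont (Complex.continuous_re.comp_continuousOn (hgc.mul hqc))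
  have I3 : CircleIntegrable (fun z => (p z * q z).re) 0 1 := bh_circle_cont (Complex.continuous_re.comp_continuousOn (hpc.mul hqc))
  have key : 0 ≤ Real.circleAverage (fun z => (‖g z‖ ^ 2 - (2:ℝ) • (g z * q z).re) + (p z * q z).re) 0 1 := by
    apply Real.circleAverage_nonneg_of_nonneg
    intro z hz
    rw [abs_one] at hz
    rw [← hpq z hz]
    have h1 : (p z * (starRingEnd ℂ) (p z)).re = ‖p z‖ ^ 2 := by
      rw [Complex.mul_conj, Complex.ofReal_re, Complex.normSq_eq_norm_sq]
    have h2 : ‖g z - p z‖ ^ 2 = ‖g z‖ ^ 2 - 2 * (g z * (starRingEnd ℂ) (p z)).re + ‖p z‖ ^ 2 := by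
      simp only [← Complex.normSq_eq_norm_sq]
      rw [Complex.normSq_sub]; ring
    rw [h1, smul_eq_mul, ← h2]
    positivity
  have I2' : CircleIntegrable (fun z => (2:ℝ) • (g z * q z).re) 0 1 := by
    refine bh_circle_cont (ContinuousOn.fun_const_smul ?_ (2:ℝ))
    exact (Complex.continuous_re.comp_continuousOn (hgc.mul hqc))
  have I4 : CircleIntegrable (fun z => ‖g z‖ ^ 2 - (2:ℝ) • (g z * q z).re) 0 1 := I1.sub I2'
  rw [Real.circleAverage_fun_add I4 I3, Real.circleAverage_fun_sub I1 I2', Real.circleAverage_fun_smul, B1, B2, smul_eq_mul] at key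
  linarith

/-- Factorisation property. -/
def bhFac (f : ℂ → ℂ) : Prop := ∃ g h : ℂ → ℂ, DiffContOnCl ℂ g (Metric.ball 0 1) ∧
  DiffContOnCl ℂ h (Metric.ball 0 1) ∧ (∀ z, ‖z‖ ≤ 1 → f z = g z * h z) ∧
  (∀ z, ‖z‖ = 1 → ‖g z‖ ^ 2 = ‖f z‖) ∧ (∀ z, ‖z‖ = 1 → ‖h z‖ ^ 2 = ‖f z‖)

lemma bhFac_mul (f₁ f₂ : ℂ → ℂ) (h1 : bhFac f₁) (h2 : bhFac f₂) : bhFac (f₁ * f₂) := by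
  obtain ⟨g, h, a, b, c, d, e⟩ := h1
  obtain ⟨g', h', a', b', c', d', e'⟩ := h2
  refine ⟨fun z => g z • g' z, fun z => h z • h' z, a.smul a', b.smul b', ?_, ?_, ?_⟩
  · intro z hz
    simp only [Pi.mul_apply, c z hz, c' z hz, smul_eq_mul]; ring
  · intro z hz
    simp only [Pi.mul_apply, smul_eq_mul, norm_mul, mul_pow, d z hz, d' z hz]
  · intro z hz
    simp only [Pi.mul_apply, smul_eq_mul, norm_mul, mul_pow, e z hz, e' z hz]

lemma bh_sqrt_sq (c : ℂ) : (c ^ (1 / 2 : ℂ)) * (c ^ (1 / 2 : ℂ)) = c := by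
  rw [← sq, ← Complex.cpow_nat_mul]; simp

lemma bhFac_const (c : ℂ) : bhFac (fun _ => c) := by
  refine ⟨fun _ => c ^ (1 / 2 : ℂ), fun _ => c ^ (1 / 2 : ℂ), diffContOnCl_const, diffContOnCl_const,
    fun z _ => (bh_sqrt_sq c).symm, fun z _ => ?_, fun z _ => ?_⟩ <;>
  · rw [sq, ← norm_mul, bh_sqrt_sq]

lemma bh_sqrt_diff (w : ℂ) (hw : ‖w‖ ≤ 1) :
    DiffContOnCl ℂ (fun z => (1 - w * z) ^ (1 / 2 : ℂ)) (Metric.ball 0 1) := by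
  have hre : ∀ z : ℂ, (1 - w * z).re ≥ 1 - ‖w‖ * ‖z‖ := fun z => by
    have := Complex.re_le_norm (w * z)
    rw [norm_mul] at this
    simp only [Complex.sub_re, Complex.one_re]
    linarith
  constructor
  · intro z hz
    apply DifferentiableAt.differentiableWithinAt
    have hz' : ‖z‖ < 1 := by simpa using hz
    refine DifferentiableAt.cpow_const (by fun_prop) ?_
    left
    have := hre z
    nlinarith [norm_nonneg z, norm_nonneg w]
  · rw [closure_ball _ one_ne_zero]
    intro z hz
    have hz' : ‖z‖ ≤ 1 := by simpa using hz
    apply ContinuousAt.continuousWithinAt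
    have h1 := Complex.continuousAt_cpow_const_of_re_pos (z := 1 - w * z) (w := (1 / 2 : ℂ)) (Or.inl (by
      have := hre z
      nlinarith [norm_nonneg z, norm_nonneg w])) (by norm_num)
    exact ContinuousAt.comp (g := fun u : ℂ => u ^ (1 / 2 : ℂ)) (f := fun z => 1 - w * z) h1 (by fun_prop)

lemma bhFac_one_sub (w : ℂ) (hw : ‖w‖ ≤ 1) : bhFac (fun z => 1 - w * z) := by
  refine ⟨_, _, bh_sqrt_diff w hw, bh_sqrt_diff w hw, fun z _ => (bh_sqrt_sq _).symm, fun z _ => ?_, fun z _ => ?_⟩ <;>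
  · rw [sq, ← norm_mul, bh_sqrt_sq]

lemma bhFac_sub (a : ℂ) : bhFac (fun z => z - a) := by
  by_cases ha : ‖a‖ < 1
  · set w := (starRingEnd ℂ) a with hw
    have hwn : ‖w‖ < 1 := by rw [hw, RCLike.norm_conj]; exact ha
    have hne : ∀ z : ℂ, ‖z‖ ≤ 1 → 1 - w * z ≠ 0 := by
      intro z hz h
      have h1 : ‖w * z‖ = 1 := by rw [← sub_eq_zero.mp h]; simp
      rw [norm_mul] at h1
      nlinarith [norm_nonneg z, norm_nonneg w]
    have hg := bh_sqrt_diff w hwn.le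
    have hgne : ∀ z : ℂ, ‖z‖ ≤ 1 → (1 - w * z) ^ (1 / 2 : ℂ) ≠ 0 := by
      intro z hz h
      have := bh_sqrt_sq (1 - w * z)
      rw [h] at this
      exact hne z hz (by rw [← this]; simp)
    have hmob : ∀ z : ℂ, ‖z‖ = 1 → ‖1 - w * z‖ = ‖z - a‖ := by
      intro z hz
      have h1 : 1 - w * z = z * (starRingEnd ℂ) (z - a) := by
        rw [map_sub, mul_sub, Complex.mul_conj, Complex.normSq_eq_norm_sq, hz]
        simp [hw, mul_comm]
      rw [h1, norm_mul, hz, one_mul, RCLike.norm_conj]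
    have hgn : ∀ z : ℂ, ‖z‖ = 1 → ‖(1 - w * z) ^ (1 / 2 : ℂ)‖ ^ 2 = ‖z - a‖ := by
      intro z hz
      rw [sq, ← norm_mul, bh_sqrt_sq, hmob z hz]
    refine ⟨fun z => (1 - w * z) ^ (1 / 2 : ℂ), fun z => ((1 - w * z) ^ (1 / 2 : ℂ))⁻¹ • (z - a), hg, ?_, ?_, hgn, ?_⟩
    · refine DiffContOnCl.smul (hg.inv ?_) ?_
      · intro z hz
        rw [closure_ball _ one_ne_zero] at hz
        exact hgne z (by simpa using hz)
      · exact (differentiable_id.sub_const a).diffContOnCl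
    · intro z hz
      simp only [smul_eq_mul]
      rw [mul_inv_cancel_left₀ (hgne z hz)]
    · intro z hz
      have hza : ‖z - a‖ ≠ 0 := by
        rw [← hmob z hz, norm_ne_zero_iff]; exact hne z hz.le
      rw [norm_smul, norm_inv, mul_pow, inv_pow, hgn z hz, sq, inv_mul_cancel_left₀ hza]
  · push Not at ha
    have ha0 : a ≠ 0 := by rintro rfl; simp at ha; linarith
    have : (fun z : ℂ => z - a) = (fun _ => -a) * (fun z => 1 - a⁻¹ * z) := by
      funext z
      simp only [Pi.mul_apply]
      field_simp
      ring
    rw [this]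
    refine bhFac_mul _ _ (bhFac_const _) (bhFac_one_sub _ ?_)
    rw [norm_inv]
    exact inv_le_one_of_one_le₀ ha

lemma bhFac_poly (P : Polynomial ℂ) : bhFac (fun z => P.eval z) := by
  have hs : P = Polynomial.C P.leadingCoeff * (P.roots.map fun a => Polynomial.X - Polynomial.C a).prod :=
    (IsAlgClosed.splits P).eq_prod_roots
  have : ∀ s : Multiset ℂ, bhFac (fun z => ((s.map fun a => Polynomial.X - Polynomial.C a).prod).eval z) := by
    intro s
    induction s using Multiset.induction_on with
    | empty => simpa using bhFac_const 1
    | cons a s ih =>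
      have := bhFac_mul _ _ (bhFac_sub a) ih
      simp only [Multiset.map_cons, Multiset.prod_cons, Polynomial.eval_mul, Polynomial.eval_sub, Polynomial.eval_X, Polynomial.eval_C]
      exact this
  have h := bhFac_mul _ _ (bhFac_const P.leadingCoeff) (this P.roots)
  rw [hs]
  simp only [Polynomial.eval_mul, Polynomial.eval_C]
  exact h

lemma bhT_poly (n : ℕ) (a : ℕ → ℂ) (k : ℕ) (hk : k < n) : bhT (fun z => ∑ l ∈ range n, a l * z ^ l) k = a k := by
  have hd : DiffContOnCl ℂ (fun z : ℂ => ∑ l ∈ range n, a l * z ^ l) (Metric.ball 0 1) := by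
    apply Differentiable.diffContOnCl; fun_prop
  have hz0 : ∀ z ∈ Metric.sphere (0:ℂ) 1, z ≠ 0 := by
    rintro z hz rfl; simp at hz
  have hinv : ∀ k, ContinuousOn (fun z : ℂ => (z ^ k)⁻¹) (Metric.sphere 0 1) := fun k =>
    (continuous_pow k).continuousOn.inv₀ fun z hz => pow_ne_zero _ (hz0 z hz)
  rw [bhT_eq _ hd]
  have : (fun z => (z ^ k)⁻¹ * ∑ l ∈ range n, a l * z ^ l) = fun z => ∑ l ∈ range n, a l • ((z ^ k)⁻¹ * z ^ l) := by
    funext z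
    rw [mul_sum]
    exact sum_congr rfl fun l _ => by simp only [smul_eq_mul]; ring
  rw [this, Real.circleAverage_fun_sum]
  · simp_rw [Real.circleAverage_fun_smul, bh_avg_pow, smul_eq_mul, mul_ite, mul_one, mul_zero]
    rw [sum_ite_eq', if_pos (mem_range.mpr hk)]
  · intro l _
    exact bh_circle_cont (continuousOn_const.fun_smul ((hinv k).fun_mul (continuous_pow l).continuousOn))

/-- Carleman's inequality for polynomials. -/
theorem bh_carleman_s6 (n : ℕ) (a : ℕ → ℂ) :
    ∑ k ∈ range n, ‖a k‖ ^ 2 / (k + 1) ≤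
      (Real.circleAverage (fun z => ‖∑ k ∈ range n, a k * z ^ k‖) 0 1) ^ 2 := by
  have hfac := bhFac_poly (∑ k ∈ range n, Polynomial.C (a k) * Polynomial.X ^ k)
  simp only [Polynomial.eval_finsetSum, Polynomial.eval_mul, Polynomial.eval_C, Polynomial.eval_pow, Polynomial.eval_X] at hfac
  obtain ⟨g, h, hg, hh, hgh, hgn, hhn⟩ := hfac
  have hak : ∀ k < n, a k = ∑ p ∈ antidiagonal k, bhT g p.1 * bhT h p.2 := by
    intro k hk
    rw [← bhT_mul g h hg hh, ← bhT_poly n a k hk]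
    unfold bhT
    congr 1
    apply Filter.EventuallyEq.iteratedDeriv_eq
    filter_upwards [Metric.ball_mem_nhds (0:ℂ) one_pos] with z hz
    exact hgh z (by simpa using (Metric.mem_ball.mp hz).le)
  have h1 : ∀ k ∈ range n, ‖a k‖ ^ 2 / (k + 1) ≤ ∑ p ∈ antidiagonal k, ‖bhT g p.1‖ ^ 2 * ‖bhT h p.2‖ ^ 2 := by
    intro k hk
    rw [hak k (mem_range.mp hk), div_le_iff₀ (by positivity)]
    have c1 : ‖∑ p ∈ antidiagonal k, bhT g p.1 * bhT h p.2‖ ^ 2 ≤ (∑ p ∈ antidiagonal k, ‖bhT g p.1 * bhT h p.2‖) ^ 2 :=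
      pow_le_pow_left₀ (norm_nonneg _) (norm_sum_le _ _) 2
    refine c1.trans ((sq_sum_le_card_mul_sum_sq).trans (le_of_eq ?_))
    rw [Finset.Nat.card_antidiagonal, mul_comm]
    push_cast
    simp only [norm_mul, mul_pow]
  refine (sum_le_sum h1).trans ?_
  have h2 : ∑ k ∈ range n, ∑ p ∈ antidiagonal k, ‖bhT g p.1‖ ^ 2 * ‖bhT h p.2‖ ^ 2 ≤
      (∑ k ∈ range n, ‖bhT g k‖ ^ 2) * (∑ k ∈ range n, ‖bhT h k‖ ^ 2) := by
    rw [sum_mul_sum, ← sum_product']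
    have e : ∑ k ∈ range n, ∑ p ∈ antidiagonal k, ‖bhT g p.1‖ ^ 2 * ‖bhT h p.2‖ ^ 2 =
        ∑ p ∈ (range n ×ˢ range n).filter (fun p => p.1 + p.2 < n), ‖bhT g p.1‖ ^ 2 * ‖bhT h p.2‖ ^ 2 := by
      rw [← sum_fiberwise_of_maps_to (t := range n) (g := fun p : ℕ × ℕ => p.1 + p.2)]
      · refine sum_congr rfl fun k hk => sum_congr ?_ fun _ _ => rfl
        ext p
        simp only [HasAntidiagonal.mem_antidiagonal, mem_filter, mem_product, mem_range] at hk ⊢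
        omega
      · intro p hp
        simp only [mem_filter] at hp
        exact mem_range.mpr hp.2
    rw [e]
    exact sum_le_sum_of_subset_of_nonneg (filter_subset _ _) fun _ _ _ => by positivity
  refine h2.trans ?_
  rw [sq]
  have e1 : Real.circleAverage (fun z => ‖g z‖ ^ 2) 0 1 = Real.circleAverage (fun z => ‖∑ k ∈ range n, a k * z ^ k‖) 0 1 := by
    apply Real.circleAverage_congr_sphere
    intro z hz
    exact hgn z (by simpa using hz)
  have e2 : Real.circleAverage (fun z => ‖h z‖ ^ 2) 0 1 = Real.circleAverage (fun z => ‖∑ k ∈ range n, a k * z ^ k‖) 0 1 := by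
    apply Real.circleAverage_congr_sphere
    intro z hz
    exact hhn z (by simpa using hz)
  have b1 := bh_bessel g hg n
  have b2 := bh_bessel h hh n
  rw [e1] at b1
  rw [e2] at b2
  exact mul_le_mul b1 b2 (sum_nonneg fun _ _ => by positivity) (le_trans (sum_nonneg fun _ _ => by positivity) b1)

lemma bh_carleman_fin_s6 (n : ℕ) (a : Fin n → ℂ) :
    ∑ k, ‖a k‖ ^ 2 / ((k : ℕ) + 1 : ℝ) ≤
      (Real.circleAverage (fun z => ‖∑ k, a k * z ^ (k : ℕ)‖) 0 1) ^ 2 := by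
  have h := bh_carleman_s6 n (fun k => if h : k < n then a ⟨k, h⟩ else 0)
  simpa [Finset.sum_range] using h

lemma bh_norm_avg_le {E : Type*} [NormedAddCommGroup E] [NormedSpace ℝ E] (f : ℂ → E) :
    ‖Real.circleAverage f 0 1‖ ≤ Real.circleAverage (fun z => ‖f z‖) 0 1 := by
  rw [Real.circleAverage, Real.circleAverage, norm_smul, smul_eq_mul, Real.norm_of_nonneg (by positivity)]
  exact mul_le_mul_of_nonneg_left (intervalIntegral.norm_integral_le_integral_norm (by positivity)) (by positivity)

/-- Helson's inequality, for families. -/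
theorem bh_helson {J : Type*} [Fintype J] (n : ℕ) (K : ℝ) (N : ℕ) (a : J → (Fin N → Fin n) → ℂ)
    (h : ∀ z : Fin N → ℂ, (∀ i, ‖z i‖ = 1) → ∑ j, ‖∑ β, a j β * ∏ i, z i ^ (β i : ℕ)‖ ≤ K) :
    ∑ j, √(∑ β, ‖a j β‖ ^ 2 / ∏ i, ((β i : ℕ) + 1 : ℝ)) ≤ K := by
  induction N with
  | zero =>
    have := h 0 (fun i => i.elim0)
    simpa [Real.sqrt_sq] using this
  | succ N ih =>
    let b : J → (Fin N → Fin n) → ℂ → ℂ := fun j β w => ∑ k, a j (Fin.cons k β) * w ^ (k : ℕ)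
    have hbc : ∀ j β, Continuous (b j β) := fun j β => by fun_prop
    have h1 : ∀ w : ℂ, ‖w‖ = 1 → ∑ j, √(∑ β, ‖b j β w‖ ^ 2 / ∏ i, ((β i : ℕ) + 1 : ℝ)) ≤ K := by
      intro w hw
      apply ih (fun j β => b j β w)
      intro z hz
      refine le_trans (le_of_eq ?_) (h (Fin.cons w z) (fun i => ?_))
      · refine sum_congr rfl fun j _ => ?_
        rw [bh_sum_cons, sum_comm]
        congr 1
        refine sum_congr rfl fun β _ => ?_
        simp only [b, sum_mul, Fin.prod_univ_succ, Fin.cons_zero, Fin.cons_succ]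
        exact sum_congr rfl fun k _ => by ring
      · refine Fin.cases ?_ (fun i => ?_) i
        · simpa using hw
        · simpa using hz i
    let u : J → ℂ → EuclideanSpace ℝ (Fin N → Fin n) := fun j w =>
      WithLp.toLp 2 fun β => ‖b j β w‖ / √(∏ i, ((β i : ℕ) + 1 : ℝ))
    have hd : ∀ β : Fin N → Fin n, (0:ℝ) < ∏ i, ((β i : ℕ) + 1 : ℝ) := fun β => prod_pos fun i _ => by positivity
    have hun : ∀ j w, ‖u j w‖ = √(∑ β, ‖b j β w‖ ^ 2 / ∏ i, ((β i : ℕ) + 1 : ℝ)) := by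
      intro j w
      rw [EuclideanSpace.norm_eq]
      congr 1
      refine sum_congr rfl fun β _ => ?_
      simp only [u]
      rw [Real.norm_eq_abs, sq_abs, div_pow, Real.sq_sqrt (hd β).le]
    have huc : ∀ j, Continuous (u j) := fun j => by
      refine (PiLp.continuous_toLp 2 _).comp ?_
      refine continuous_pi fun β => ?_
      exact ((hbc j β).norm).div_const _
    have hui : ∀ j, CircleIntegrable (u j) 0 1 := fun j => bh_circle_cont (huc j).continuousOn
    have hcoord : ∀ j β, (Real.circleAverage (u j) 0 1) β =
        (Real.circleAverage (fun w => ‖b j β w‖) 0 1) / √(∏ i, ((β i : ℕ) + 1 : ℝ)) := by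
      intro j β
      have e := (EuclideanSpace.proj (𝕜 := ℝ) β : EuclideanSpace ℝ (Fin N → Fin n) →L[ℝ] ℝ).circleAverage_comp_comm (hui j)
      have e2 : (EuclideanSpace.proj (𝕜 := ℝ) β : EuclideanSpace ℝ (Fin N → Fin n) →L[ℝ] ℝ) ∘ (u j) = fun w => (√(∏ i, ((β i : ℕ) + 1 : ℝ)))⁻¹ • ‖b j β w‖ := by
        funext w
        simp [u, div_eq_inv_mul]
      rw [e2, Real.circleAverage_fun_smul] at e
      rw [div_eq_inv_mul]
      exact e.symm
    have h2 : ∀ j, √(∑ β, ‖a j β‖ ^ 2 / ∏ i, ((β i : ℕ) + 1 : ℝ)) ≤ Real.circleAverage (fun w => ‖u j w‖) 0 1 := by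
      intro j
      refine le_trans ?_ (bh_norm_avg_le (u j))
      rw [EuclideanSpace.norm_eq]
      apply Real.sqrt_le_sqrt
      rw [bh_sum_cons, sum_comm]
      refine sum_le_sum fun β _ => ?_
      rw [hcoord, Real.norm_eq_abs, sq_abs, div_pow, Real.sq_sqrt (hd β).le, le_div_iff₀ (hd β)]
      refine le_trans (le_of_eq ?_) (bh_carleman_fin_s6 n (fun k => a j (Fin.cons k β)))
      rw [sum_mul]
      refine sum_congr rfl fun k _ => ?_
      rw [Fin.prod_univ_succ]
      simp only [Fin.cons_zero, Fin.cons_succ]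
      have := (hd β).ne'
      field_simp
    refine (sum_le_sum fun j _ => h2 j).trans ?_
    rw [← Real.circleAverage_fun_sum fun j _ => bh_circle_cont (huc j).norm.continuousOn]
    apply Real.circleAverage_mono_on_of_le_circle
    · exact bh_circle_cont (continuous_finsetSum _ fun j _ => (huc j).norm).continuousOn
    · intro w hw
      simp only [hun]
      exact h1 w (by simpa using hw)

lemma bh_exists_phase (x : ℂ) : ∃ u : ℂ, ‖u‖ ≤ 1 ∧ u * x = (‖x‖ : ℂ) := by
  by_cases hx : x = 0
  · exact ⟨0, by simp, by simp [hx]⟩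
  · have hn : (‖x‖ : ℂ) ≠ 0 := by exact_mod_cast norm_ne_zero_iff.mpr hx
    refine ⟨(starRingEnd ℂ) x / ‖x‖, ?_, ?_⟩
    · rw [norm_div, RCLike.norm_conj, Complex.norm_real, norm_norm, div_self (norm_ne_zero_iff.mpr hx)]
    · rw [div_mul_eq_mul_div, mul_comm, Complex.mul_conj, Complex.normSq_eq_norm_sq]
      push_cast
      field_simp

lemma bh_deriv_mono {N : ℕ} (w u : Fin N → ℂ) (α : Fin N → ℕ) :
    HasDerivAt (fun t : ℂ => ∏ j, (w j * (1 + t * u j)) ^ α j)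
      (∑ j, (α j : ℂ) * u j * ∏ j, w j ^ α j) 0 := by
  have h1 : ∀ j, HasDerivAt (fun t : ℂ => (w j * (1 + t * u j)) ^ α j)
      ((α j : ℂ) * (w j * (1 + 0 * u j)) ^ (α j - 1) * (w j * (1 * u j))) 0 := by
    intro j
    exact HasDerivAt.fun_pow ((((hasDerivAt_id (0:ℂ)).mul_const (u j)).const_add 1).const_mul (w j)) (α j)
  have h := HasDerivAt.fun_finsetProd (u := univ) (fun j _ => h1 j)
  refine h.congr_deriv ?_
  symm
  refine Finset.sum_congr rfl fun j _ => ?_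
  rw [← mul_prod_erase univ _ (mem_univ j)]
  simp only [zero_mul, add_zero, mul_one, smul_eq_mul]
  rcases Nat.eq_zero_or_pos (α j) with h0 | h0
  · simp [h0]
  · obtain ⟨r, hr⟩ : ∃ r, α j = r + 1 := ⟨α j - 1, by omega⟩
    rw [hr, Nat.add_sub_cancel, pow_succ]
    ring

lemma bh_deriv_bound {N m : ℕ} (hm : 1 ≤ m) (Λ : Finset (Fin N → ℕ)) (hΛ : ∀ α ∈ Λ, ∑ j, α j = m)
    (c : (Fin N → ℕ) → ℂ) (K : ℝ)
    (hK : ∀ z : Fin N → ℂ, (∀ j, ‖z j‖ ≤ 1) → ‖∑ α ∈ Λ, c α * ∏ j, z j ^ α j‖ ≤ K)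
    (w : Fin N → ℂ) (hw : ∀ j, ‖w j‖ = 1) :
    ∑ j, ‖∑ α ∈ Λ, ((α j : ℂ) / m * c α) * ∏ i, w i ^ α i‖ ≤ Real.exp 1 * K := by
  have hm0 : (0:ℝ) < m := by exact_mod_cast hm
  have hmC : (m:ℂ) ≠ 0 := by exact_mod_cast hm0.ne'
  have hK0 : 0 ≤ K := (norm_nonneg _).trans (hK 0 (by simp))
  choose u hu1 hu2 using fun j => bh_exists_phase (∑ α ∈ Λ, ((α j : ℂ) / m * c α) * ∏ i, w i ^ α i)
  let φ : ℂ → ℂ := fun t => ∑ α ∈ Λ, c α * ∏ j, (w j * (1 + t * u j)) ^ α j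
  have hd : HasDerivAt φ (∑ α ∈ Λ, c α * ∑ j, (α j : ℂ) * u j * ∏ j, w j ^ α j) 0 :=
    HasDerivAt.fun_sum fun α _ => (bh_deriv_mono w u α).const_mul (c α)
  have hdiff : Differentiable ℂ φ := by fun_prop
  set R : ℝ := 1 + 1 / m with hR
  have hR0 : 0 < R := by positivity
  have hRC : (R : ℂ) ≠ 0 := by exact_mod_cast hR0.ne'
  have hbound : ∀ t ∈ Metric.sphere (0:ℂ) (1 / m), ‖φ t‖ ≤ R ^ m * K := by
    intro t ht
    have ht' : ‖t‖ = 1 / m := by simpa using ht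
    have e : φ t = (R : ℂ) ^ m * ∑ α ∈ Λ, c α * ∏ j, (w j * (1 + t * u j) / R) ^ α j := by
      simp only [φ]
      rw [mul_sum]
      refine sum_congr rfl fun α hα => ?_
      rw [← hΛ α hα, ← prod_pow_eq_pow_sum, mul_left_comm, ← prod_mul_distrib]
      congr 1
      refine prod_congr rfl fun j _ => ?_
      rw [← mul_pow, mul_div_cancel₀ _ hRC]
    rw [e, norm_mul, norm_pow, Complex.norm_real, Real.norm_of_nonneg hR0.le]
    refine mul_le_mul_of_nonneg_left (hK _ fun j => ?_) (by positivity)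
    rw [norm_div, norm_mul, hw j, one_mul, Complex.norm_real, Real.norm_of_nonneg hR0.le, div_le_one hR0]
    calc ‖1 + t * u j‖ ≤ ‖(1:ℂ)‖ + ‖t‖ * ‖u j‖ := (norm_add_le _ _).trans (by rw [norm_mul])
      _ ≤ R := by
        rw [norm_one, ht', hR]
        have : (1 / m : ℝ) * ‖u j‖ ≤ 1 / m * 1 := mul_le_mul_of_nonneg_left (hu1 j) (by positivity)
        linarith
  have hc := Complex.norm_deriv_le_of_forall_mem_sphere_norm_le (by positivity) hdiff.diffContOnCl hbound
  rw [hd.deriv] at hc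
  have hsum : ((∑ j, ‖∑ α ∈ Λ, ((α j : ℂ) / m * c α) * ∏ i, w i ^ α i‖ : ℝ) : ℂ) =
      (∑ α ∈ Λ, c α * ∑ j, (α j : ℂ) * u j * ∏ j, w j ^ α j) / m := by
    push_cast
    simp only [← hu2]
    simp only [mul_sum, sum_div]
    rw [sum_comm]
    refine sum_congr rfl fun α _ => sum_congr rfl fun j _ => ?_
    field_simp
  have hnn : 0 ≤ ∑ j, ‖∑ α ∈ Λ, ((α j : ℂ) / m * c α) * ∏ i, w i ^ α i‖ := sum_nonneg fun _ _ => norm_nonneg _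
  rw [← Real.norm_of_nonneg hnn, ← Complex.norm_real, hsum, norm_div, Complex.norm_natCast, div_le_iff₀ hm0]
  refine hc.trans ?_
  have hRe : R ^ m ≤ Real.exp 1 := by
    have h1 : R ≤ Real.exp (1 / m) := by
      rw [hR, add_comm]; exact Real.add_one_le_exp _
    calc R ^ m ≤ Real.exp (1 / m) ^ m := pow_le_pow_left₀ hR0.le h1 m
      _ = Real.exp 1 := by
        rw [← Real.exp_nat_mul]; congr 1; field_simp
  rw [div_div_eq_mul_div, div_one]
  have := mul_le_mul_of_nonneg_right hRe hK0
  exact mul_le_mul_of_nonneg_right this hm0.le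

/-- Multi-index of a tuple. -/
def bhCnt {m N : ℕ} (i : Fin m → Fin N) : Fin N → ℕ := fun j => (univ.filter fun k => i k = j).card

lemma bhCnt_exists {N : ℕ} (m : ℕ) (α : Fin N → ℕ) (h : ∑ j, α j = m) : ∃ i : Fin m → Fin N, bhCnt i = α := by
  induction m generalizing α with
  | zero =>
    refine ⟨Fin.elim0, ?_⟩
    funext j
    have := (sum_eq_zero_iff.mp h) j (mem_univ j)
    simp [bhCnt, this]
  | succ m ih =>
    obtain ⟨j, hj⟩ : ∃ j, α j ≠ 0 := by
      by_contra hcon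
      push Not at hcon
      simp [hcon] at h
    have hs : ∑ l, (α l - if l = j then 1 else 0) = m := by
      have : ∑ l, α l = ∑ l, ((α l - if l = j then 1 else 0) + if l = j then 1 else 0) := by
        refine sum_congr rfl fun l _ => ?_
        split_ifs with hl
        · subst hl; omega
        · simp
      rw [sum_add_distrib] at this
      simp only [sum_ite_eq', mem_univ, if_true] at this
      omega
    obtain ⟨i, hi⟩ := ih _ hs
    refine ⟨Fin.cons j i, ?_⟩
    funext l
    have hl := congrFun hi l
    simp only [bhCnt] at hl ⊢
    rw [card_filter, Fin.sum_univ_succ]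
    simp only [Fin.cons_zero, Fin.cons_succ]
    rw [← card_filter, hl]
    by_cases h : l = j
    · subst h; simp; omega
    · simp [h, Ne.symm h]

noncomputable def bhW {N : ℕ} (m : ℕ) (α : Fin N → ℕ) : ℕ := (univ.filter fun i : Fin m → Fin N => bhCnt i = α).card

lemma bhCnt_perm {m N : ℕ} (σ : Equiv.Perm (Fin m)) (i : Fin m → Fin N) : bhCnt (i ∘ σ) = bhCnt i := by
  funext j
  simp only [bhCnt, card_filter]
  exact Equiv.sum_comp σ (fun k => if i k = j then 1 else 0)

lemma bh_count {m N : ℕ} (α : Fin N → ℕ) (j : Fin N) (k : Fin m) :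
    m * (univ.filter fun i : Fin m → Fin N => bhCnt i = α ∧ i k = j).card = bhW m α * α j := by
  have h1 : ∀ k' : Fin m, (univ.filter fun i : Fin m → Fin N => bhCnt i = α ∧ i k' = j).card =
      (univ.filter fun i : Fin m → Fin N => bhCnt i = α ∧ i k = j).card := by
    intro k'
    refine card_bij' (fun i _ => i ∘ Equiv.swap k k') (fun i _ => i ∘ Equiv.swap k k') ?_ ?_ ?_ ?_
    · intro i hi
      simp only [mem_filter, mem_univ, true_and] at hi ⊢
      exact ⟨by rw [bhCnt_perm]; exact hi.1, by simpa using hi.2⟩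
    · intro i hi
      simp only [mem_filter, mem_univ, true_and] at hi ⊢
      exact ⟨by rw [bhCnt_perm]; exact hi.1, by simpa using hi.2⟩
    · intro i _; funext l; simp
    · intro i _; funext l; simp
  calc m * (univ.filter fun i : Fin m → Fin N => bhCnt i = α ∧ i k = j).card
      = ∑ k' : Fin m, (univ.filter fun i : Fin m → Fin N => bhCnt i = α ∧ i k' = j).card := by
        rw [sum_congr rfl fun k' _ => h1 k']; simp
    _ = ∑ i ∈ univ.filter (fun i : Fin m → Fin N => bhCnt i = α), bhCnt i j := by
        simp only [bhCnt, card_filter, sum_filter]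
        rw [sum_comm]
        refine sum_congr rfl fun i _ => ?_
        split_ifs with h
        · simp only [h, true_and]
        · simp [h]
    _ = bhW m α * α j := by
        rw [bhW, sum_congr rfl (g := fun _ => α j)]
        · simp
        · intro i hi; rw [(mem_filter.mp hi).2]

lemma bh_sum_cnt {m N : ℕ} (Λ : Finset (Fin N → ℕ)) (F : (Fin N → ℕ) → ℝ) (Q : (Fin m → Fin N) → Prop) [DecidablePred Q] :
    ∑ i : Fin m → Fin N, (if Q i then (if bhCnt i ∈ Λ then F (bhCnt i) else 0) else 0) =
      ∑ α ∈ Λ, ((univ.filter fun i : Fin m → Fin N => bhCnt i = α ∧ Q i).card : ℝ) * F α := by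
  have : ∀ α ∈ Λ, ((univ.filter fun i : Fin m → Fin N => bhCnt i = α ∧ Q i).card : ℝ) * F α =
      ∑ i : Fin m → Fin N, if Q i then (if bhCnt i = α then F α else 0) else 0 := by
    intro α _
    rw [card_filter]
    push_cast
    rw [sum_mul]
    refine sum_congr rfl fun i _ => ?_
    by_cases h1 : Q i <;> by_cases h2 : bhCnt i = α <;> simp [h1, h2]
  rw [sum_congr rfl this, sum_comm]
  refine sum_congr rfl fun i _ => ?_
  split_ifs with h1 h2
  · rw [sum_ite_eq, if_pos h2]
  · rw [sum_ite_eq, if_neg h2]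
  · simp

theorem bh_blei_sym {N : ℕ} (n : ℕ) (Λ : Finset (Fin N → ℕ)) (hΛ : ∀ α ∈ Λ, ∑ j, α j = n + 1)
    (b : (Fin N → ℕ) → ℝ) (hb : ∀ α, 0 ≤ b α) :
    ∑ α ∈ Λ, b α ^ (2 * (n + 1 : ℝ) / (n + 2)) ≤
      (√(n + 1 : ℝ) * ∑ j, √(∑ α ∈ Λ, ((α j : ℝ) / (n + 1) * b α) ^ 2)) ^ (2 * (n + 1 : ℝ) / (n + 2)) := by
  set p : ℝ := 2 * (n + 1 : ℝ) / (n + 2) with hp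
  have hp0 : 0 < p := by positivity
  have hW : ∀ α ∈ Λ, (1:ℝ) ≤ bhW (n + 1) α := by
    intro α hα
    obtain ⟨i, hi⟩ := bhCnt_exists (n + 1) α (hΛ α hα)
    have : 0 < bhW (n + 1) α := card_pos.mpr ⟨i, by simp [hi]⟩
    exact_mod_cast this
  let y : (Fin N → ℕ) → ℝ := fun α => b α * (bhW (n + 1) α : ℝ) ^ (-(1 / p))
  have hy : ∀ α, 0 ≤ y α := fun α => mul_nonneg (hb α) (Real.rpow_nonneg (Nat.cast_nonneg _) _)
  let x : (Fin (n + 1) → Fin N) → ℝ := fun i => if bhCnt i ∈ Λ then y (bhCnt i) else 0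
  have hx : ∀ i, 0 ≤ x i := fun i => by
    simp only [x]; split_ifs
    · exact hy _
    · exact le_rfl
  have h := bh_blei_s6 n x hx
  rw [← hp] at h
  have hl : ∑ i, x i ^ p = ∑ α ∈ Λ, b α ^ p := by
    have e := bh_sum_cnt (m := n + 1) Λ (fun α => y α ^ p) (fun _ => True)
    simp only [if_true, and_true] at e
    have e2 : ∀ i, x i ^ p = if bhCnt i ∈ Λ then y (bhCnt i) ^ p else 0 := fun i => by
      simp only [x]; split_ifs
      · rfl
      · exact Real.zero_rpow hp0.ne'
    rw [sum_congr rfl fun i _ => e2 i, e]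
    refine sum_congr rfl fun α hα => ?_
    have hw0 : (0:ℝ) < bhW (n + 1) α := lt_of_lt_of_le one_pos (hW α hα)
    simp only [y]
    rw [Real.mul_rpow (hb α) (Real.rpow_nonneg hw0.le _), ← Real.rpow_mul hw0.le]
    have : -(1 / p) * p = -1 := by field_simp
    rw [this, Real.rpow_neg_one]
    change (bhW (n + 1) α : ℝ) * _ = _
    field_simp
  rw [hl] at h
  set T := ∑ j, √(∑ α ∈ Λ, ((α j : ℝ) / (n + 1) * b α) ^ 2) with hT
  have hT0 : 0 ≤ T := sum_nonneg fun _ _ => Real.sqrt_nonneg _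
  have hS : ∀ k, bhS k x ≤ √(n + 1 : ℝ) * T := by
    intro k
    rw [bhS, hT, mul_sum]
    refine sum_le_sum fun j _ => ?_
    rw [← Real.sqrt_mul (by positivity)]
    apply Real.sqrt_le_sqrt
    have e := bh_sum_cnt (m := n + 1) Λ (fun α => y α ^ 2) (fun i => i k = j)
    have e2 : ∀ i, x i ^ 2 = if bhCnt i ∈ Λ then y (bhCnt i) ^ 2 else 0 := fun i => by
      simp only [x]; split_ifs
      · rfl
      · simp
    simp only [e2]
    rw [e, mul_sum]
    refine sum_le_sum fun α hα => ?_
    have hw1 := hW α hα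
    have hw0 : (0:ℝ) < bhW (n + 1) α := lt_of_lt_of_le one_pos hw1
    have hc : (n + 1 : ℝ) * ((univ.filter fun i : Fin (n + 1) → Fin N => bhCnt i = α ∧ i k = j).card : ℝ) =
      bhW (n + 1) α * α j := by exact_mod_cast bh_count α j k
    have hn1 : (0:ℝ) < n + 1 := by positivity
    have hcard : ((univ.filter fun i : Fin (n + 1) → Fin N => bhCnt i = α ∧ i k = j).card : ℝ) =
      bhW (n + 1) α * α j / (n + 1) := by rw [eq_div_iff hn1.ne', ← hc]; ring
    rw [hcard]
    have hy2 : (bhW (n + 1) α : ℝ) * y α ^ 2 ≤ b α ^ 2 := by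
      have : (bhW (n + 1) α : ℝ) * y α ^ 2 = b α ^ 2 * (bhW (n + 1) α : ℝ) ^ (1 - 2 / p) := by
        simp only [y]
        rw [mul_pow, ← Real.rpow_natCast (_ ^ _) 2, ← Real.rpow_mul hw0.le, mul_left_comm]
        congr 1
        rw [sub_eq_add_neg, Real.rpow_add hw0, Real.rpow_one]
        congr 2
        push_cast; ring
      rw [this]
      refine mul_le_of_le_one_right (sq_nonneg _) (Real.rpow_le_one_of_one_le_of_nonpos hw1 ?_)
      rw [sub_nonpos, le_div_iff₀ hp0, hp, one_mul, div_le_iff₀ (by positivity)]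
      linarith
    have hαj : (α j : ℝ) ≤ (α j : ℝ) ^ 2 := by exact_mod_cast Nat.le_self_pow two_ne_zero _
    calc (bhW (n + 1) α : ℝ) * α j / (n + 1) * y α ^ 2 = (α j : ℝ) / (n + 1) * (bhW (n + 1) α * y α ^ 2) := by ring
      _ ≤ (α j : ℝ) ^ 2 / (n + 1) * b α ^ 2 := by gcongr
      _ = _ := by field_simp
  refine h.trans ?_
  calc ∏ k, bhS k x ^ (2 / (n + 2 : ℝ)) ≤ ∏ k : Fin (n + 1), (√(n + 1 : ℝ) * T) ^ (2 / (n + 2 : ℝ)) :=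
        prod_le_prod (fun k _ => Real.rpow_nonneg (bhS_nonneg k x) _) fun k _ =>
          Real.rpow_le_rpow (bhS_nonneg k x) (hS k) (by positivity)
    _ = _ := by
      rw [prod_const, card_univ, Fintype.card_fin, ← Real.rpow_natCast, ← Real.rpow_mul (by positivity)]
      congr 1
      rw [hp]; push_cast; ring

lemma bh_sum_fin {N m : ℕ} {R : Type*} [AddCommMonoid R] (Λ : Finset (Fin N → ℕ)) (hΛ : ∀ α ∈ Λ, ∀ j, α j < m) (F : (Fin N → ℕ) → R) :
    ∑ β : Fin N → Fin m, (if (fun j => (β j : ℕ)) ∈ Λ then F (fun j => (β j : ℕ)) else 0) = ∑ α ∈ Λ, F α := by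
  rw [← sum_filter]
  refine sum_bij (fun β _ => fun j => (β j : ℕ)) ?_ ?_ ?_ ?_
  · intro β hβ; exact (mem_filter.mp hβ).2
  · intro β _ γ _ h
    funext j
    exact Fin.ext (congrFun h j)
  · intro α hα
    exact ⟨fun j => ⟨α j, hΛ α hα j⟩, by simpa using hα, rfl⟩
  · intro _ _; rfl

theorem bh_main {N : ℕ} (n : ℕ) (Λ : Finset (Fin N → ℕ)) (hΛ : ∀ α ∈ Λ, ∑ j, α j = n + 1)
    (c : (Fin N → ℕ) → ℂ) (K : ℝ)
    (hK : ∀ z : Fin N → ℂ, (∀ j, ‖z j‖ ≤ 1) → ‖∑ α ∈ Λ, c α * ∏ j, z j ^ α j‖ ≤ K) :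
    ∑ α ∈ Λ, (‖c α‖ / √(∏ j, (α j + 1 : ℝ))) ^ (2 * (n + 1 : ℝ) / (n + 2)) ≤
      (√(n + 1 : ℝ) * (Real.exp 1 * K)) ^ (2 * (n + 1 : ℝ) / (n + 2)) := by
  have hlt : ∀ α ∈ Λ, ∀ j, α j < n + 2 := fun α hα j => by
    have := single_le_sum (f := α) (fun _ _ => Nat.zero_le _) (mem_univ j)
    have h2 := hΛ α hα
    omega
  refine (bh_blei_sym n Λ hΛ (fun α => ‖c α‖ / √(∏ j, (α j + 1 : ℝ))) (fun α => by positivity)).trans ?_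
  refine Real.rpow_le_rpow (by positivity) ?_ (by positivity)
  refine mul_le_mul_of_nonneg_left ?_ (by positivity)
  have hd := bh_deriv_bound (m := n + 1) (by omega) Λ hΛ c K hK
  have h := bh_helson (J := Fin N) (n + 2) (Real.exp 1 * K) N
    (fun j β => if (fun j => (β j : ℕ)) ∈ Λ then ((β j : ℕ) : ℂ) / ((n + 1 : ℕ) : ℂ) * c (fun j => (β j : ℕ)) else 0) (by
      intro z hz
      refine le_trans (le_of_eq ?_) (hd z hz)
      refine sum_congr rfl fun j _ => ?_
      rw [← bh_sum_fin Λ hlt]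
      congr 1
      refine sum_congr rfl fun β _ => ?_
      rw [ite_mul, zero_mul])
  refine le_trans (le_of_eq ?_) h
  refine sum_congr rfl fun j _ => ?_
  rw [← bh_sum_fin Λ hlt]
  congr 1
  refine sum_congr rfl fun β _ => ?_
  split_ifs
  · have : (0:ℝ) ≤ ∏ i, ((β i : ℕ) + 1 : ℝ) := prod_nonneg fun i _ => by positivity
    rw [mul_pow, div_pow ‖_‖, Real.sq_sqrt this, norm_mul, norm_div, mul_pow, Complex.norm_natCast, Complex.norm_natCast]
    push_cast
    ring
  · simp

theorem bohnenblust_hille_bounded_vars (m M N : ℕ) (hm : 2 ≤ m) (hM : 1 ≤ M) (hN : 1 ≤ N)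
    (c : (Fin N → ℕ) → ℂ) :
    (∑ α ∈ (Finset.Nat.antidiagonalTuple N m).filter
          (fun α => (Finset.univ.filter fun j => α j ≠ 0).card ≤ M),
        ‖c α‖ ^ ((2 * m : ℝ) / (m + 1))) ^ (((m : ℝ) + 1) / (2 * m))
      ≤ Real.exp 1 * 2 ^ ((M : ℝ) / 2) * (m : ℝ) ^ (((M : ℝ) + 1) / 2) *
        ⨆ z ∈ {z : Fin N → ℂ | ∀ j, ‖z j‖ ≤ 1},
          ‖∑ α ∈ (Finset.Nat.antidiagonalTuple N m).filter
              (fun α => (Finset.univ.filter fun j => α j ≠ 0).card ≤ M),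
            c α * ∏ j, z j ^ α j‖ := by
  obtain ⟨n, rfl⟩ : ∃ n, m = n + 1 := ⟨m - 1, by omega⟩
  set Λ := (Finset.Nat.antidiagonalTuple N (n + 1)).filter
          (fun α => (Finset.univ.filter fun j => α j ≠ 0).card ≤ M) with hΛdef
  have hΛ : ∀ α ∈ Λ, ∑ j, α j = n + 1 := fun α hα =>
    Finset.Nat.mem_antidiagonalTuple.mp (mem_filter.mp hα).1
  have hvar : ∀ α ∈ Λ, (Finset.univ.filter fun j => α j ≠ 0).card ≤ M := fun α hα => (mem_filter.mp hα).2
  set K := ⨆ z ∈ {z : Fin N → ℂ | ∀ j, ‖z j‖ ≤ 1}, ‖∑ α ∈ Λ, c α * ∏ j, z j ^ α j‖ with hKdef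
  have hK : ∀ z : Fin N → ℂ, (∀ j, ‖z j‖ ≤ 1) → ‖∑ α ∈ Λ, c α * ∏ j, z j ^ α j‖ ≤ K := by
    intro z hz
    have hbd : BddAbove (Set.range fun z : Fin N → ℂ => ⨆ (_ : z ∈ {z : Fin N → ℂ | ∀ j, ‖z j‖ ≤ 1}), ‖∑ α ∈ Λ, c α * ∏ j, z j ^ α j‖) := by
      refine ⟨∑ α ∈ Λ, ‖c α‖, ?_⟩
      rintro _ ⟨z, rfl⟩
      refine Real.iSup_le (fun hz => ?_) (by positivity)
      refine (norm_sum_le _ _).trans (sum_le_sum fun α _ => ?_)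
      rw [norm_mul, norm_prod]
      refine mul_le_of_le_one_right (norm_nonneg _) (prod_le_one (fun _ _ => norm_nonneg _) fun j _ => ?_)
      rw [norm_pow]
      exact pow_le_one₀ (norm_nonneg _) (hz j)
    refine le_trans (le_of_eq ?_) (le_ciSup hbd z)
    exact (ciSup_pos (f := fun _ => ‖∑ α ∈ Λ, c α * ∏ j, z j ^ α j‖) (show z ∈ {z : Fin N → ℂ | ∀ j, ‖z j‖ ≤ 1} from hz)).symm
  have hK0 : 0 ≤ K := (norm_nonneg _).trans (hK 0 (by simp))
  have h := bh_main n Λ hΛ c K hK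
  have ep : (2 * ((n + 1 : ℕ) : ℝ)) / (((n + 1 : ℕ) : ℝ) + 1) = 2 * (n + 1 : ℝ) / (n + 2) := by
    push_cast; congr 1; ring
  have ep' : ((((n + 1 : ℕ) : ℝ)) + 1) / (2 * ((n + 1 : ℕ) : ℝ)) = (2 * (n + 1 : ℝ) / (n + 2))⁻¹ := by
    rw [← ep, inv_div]
  rw [ep, ep']
  set p : ℝ := 2 * (n + 1 : ℝ) / (n + 2) with hp
  have hp0 : 0 < p := by positivity
  set D : ℝ := √((2 * (n + 1 : ℝ)) ^ M) with hD
  have hD0 : 0 ≤ D := Real.sqrt_nonneg _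
  have hd : ∀ α ∈ Λ, √(∏ j, (α j + 1 : ℝ)) ≤ D := by
    intro α hα
    apply Real.sqrt_le_sqrt
    have hle : ∀ j, (α j : ℝ) + 1 ≤ 2 * (n + 1 : ℝ) := by
      intro j
      have := single_le_sum (f := α) (fun _ _ => Nat.zero_le _) (mem_univ j)
      rw [hΛ α hα] at this
      have h2 : α j + 1 ≤ 2 * (n + 1) := by omega
      exact_mod_cast h2
    calc ∏ j, (α j + 1 : ℝ) = ∏ j ∈ univ.filter (fun j => α j ≠ 0), (α j + 1 : ℝ) := by
          rw [prod_filter]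
          refine prod_congr rfl fun j _ => ?_
          split_ifs with h0
          · rfl
          · push Not at h0; simp [h0]
      _ ≤ ∏ j ∈ univ.filter (fun j => α j ≠ 0), (2 * (n + 1 : ℝ)) :=
          prod_le_prod (fun _ _ => by positivity) fun j _ => hle j
      _ = (2 * (n + 1 : ℝ)) ^ (univ.filter (fun j => α j ≠ 0)).card := by rw [prod_const]
      _ ≤ _ := pow_le_pow_right₀ (by linarith [(Nat.cast_nonneg n : (0:ℝ) ≤ n)]) (hvar α hα)
  have h3 : ∑ α ∈ Λ, ‖c α‖ ^ p ≤ (D * (√(n + 1 : ℝ) * (Real.exp 1 * K))) ^ p := by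
    rw [Real.mul_rpow hD0 (by positivity)]
    refine le_trans ?_ (mul_le_mul_of_nonneg_left h (Real.rpow_nonneg hD0 p))
    rw [mul_sum]
    refine sum_le_sum fun α hα => ?_
    have hpos : 0 < √(∏ j, (α j + 1 : ℝ)) := Real.sqrt_pos.mpr (prod_pos fun _ _ => by positivity)
    rw [← Real.mul_rpow hD0 (by positivity)]
    refine Real.rpow_le_rpow (norm_nonneg _) ?_ hp0.le
    rw [mul_div_assoc', le_div_iff₀ hpos, mul_comm]
    exact mul_le_mul_of_nonneg_right (hd α hα) (norm_nonneg _)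
  refine (Real.rpow_le_rpow (sum_nonneg fun _ _ => by positivity) h3 (by positivity)).trans (le_of_eq ?_)
  rw [Real.rpow_rpow_inv (by positivity) hp0.ne']
  have hn1 : (0:ℝ) < n + 1 := by positivity
  have hDe : D = 2 ^ ((M : ℝ) / 2) * (n + 1 : ℝ) ^ ((M : ℝ) / 2) := by
    rw [hD, Real.sqrt_eq_rpow, ← Real.rpow_natCast, ← Real.rpow_mul (by positivity), ← Real.mul_rpow (by norm_num) hn1.le]
    congr 1; ring
  have hE : ((n + 1 : ℕ) : ℝ) ^ (((M : ℝ) + 1) / 2) = (n + 1 : ℝ) ^ ((M : ℝ) / 2) * √(n + 1 : ℝ) := by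
    rw [Real.sqrt_eq_rpow, ← Real.rpow_add hn1]
    push_cast
    congr 1; ring
  rw [hDe, hE]
  ring
end

section
/- (Helson's inequality.) Let N ≥ 1 and let f(w) = ∑_{α ∈ ℕ₀^N} c_α w^α be a polynomial in N complex variables (only finitely many c_α nonzero). Then (∑_{α ∈ ℕ₀^N} |c_α|² / ∏_{j=1}^N (α_j+1))^{1/2} ≤ ∫_{𝕋^N} |f(w)| dσ(w), where σ is the normalized Haar (product Lebesgue) measure on the N-torus 𝕋^N = {w ∈ ℂ^N : |w_j| = 1 for all j}. -/
open Finset MeasureTheory Real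

/-- `f` factors on the unit disc as `u * v` with `|u|² = |v|² = |f|` on the circle. -/
def HelsonFactor (f : ℂ → ℂ) : Prop :=
  ∃ u v : ℂ → ℂ, DiffContOnCl ℂ u (Metric.ball 0 1) ∧ DiffContOnCl ℂ v (Metric.ball 0 1) ∧
    (∀ z ∈ Metric.ball (0:ℂ) 1, f z = u z * v z) ∧
    (∀ z : ℂ, ‖z‖ = 1 → ‖u z‖ ^ 2 = ‖f z‖) ∧ (∀ z : ℂ, ‖z‖ = 1 → ‖v z‖ ^ 2 = ‖f z‖)

lemma helson_sqrt_sq (z : ℂ) : Complex.sqrt z ^ 2 = z := by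
  simp [Complex.sqrt]

lemma helson_norm_sqrt (z : ℂ) : ‖Complex.sqrt z‖ ^ 2 = ‖z‖ := by
  rw [← norm_pow, helson_sqrt_sq]

lemma HelsonFactor.mul {f g : ℂ → ℂ} (hf : HelsonFactor f) (hg : HelsonFactor g) :
    HelsonFactor (fun z => f z * g z) := by
  obtain ⟨u, v, hu, hv, h1, h2, h3⟩ := hf
  obtain ⟨u', v', hu', hv', h1', h2', h3'⟩ := hg
  refine ⟨fun z => u z * u' z, fun z => v z * v' z, ?_, ?_, ?_, ?_, ?_⟩
  · exact ⟨hu.1.mul hu'.1, hu.2.mul hu'.2⟩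
  · exact ⟨hv.1.mul hv'.1, hv.2.mul hv'.2⟩
  · intro z hz
    simp only
    rw [h1 z hz, h1' z hz]; ring
  · intro z hz
    simp only
    rw [norm_mul, norm_mul, mul_pow, h2 z hz, h2' z hz]
  · intro z hz
    simp only
    rw [norm_mul, norm_mul, mul_pow, h3 z hz, h3' z hz]

lemma helson_factor_const (c : ℂ) : HelsonFactor (fun _ => c) := by
  refine ⟨fun _ => Complex.sqrt c, fun _ => Complex.sqrt c, diffContOnCl_const,
    diffContOnCl_const, ?_, ?_, ?_⟩
  · intro z _
    simp only
    rw [← sq, helson_sqrt_sq]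
  · intro z _; exact helson_norm_sqrt c
  · intro z _; exact helson_norm_sqrt c

lemma helson_dcoc_sqrt (b : ℂ) (hb : ‖b‖ ≤ 1) :
    DiffContOnCl ℂ (fun z => Complex.sqrt (1 - b * z)) (Metric.ball 0 1) := by
  have key : ∀ z : ℂ, 1 - ‖z‖ ≤ (1 - b * z).re := by
    intro z
    have h1 : (b * z).re ≤ ‖b * z‖ := Complex.re_le_norm _
    have h2 : ‖b * z‖ ≤ ‖z‖ := by
      rw [norm_mul]
      exact mul_le_of_le_one_left (norm_nonneg _) hb
    simp only [Complex.sub_re, Complex.one_re]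
    linarith
  constructor
  · intro z hz
    have hz : ‖z‖ < 1 := by simpa using hz
    have : (1 - b * z) ∈ Complex.slitPlane := Or.inl (by linarith [key z])
    apply DifferentiableAt.differentiableWithinAt
    exact (Complex.differentiableAt_sqrt this).comp z (f := fun z => 1 - b * z) (by fun_prop)
  · intro z hz
    rw [closure_ball _ one_ne_zero] at hz
    have hz : ‖z‖ ≤ 1 := by simpa using hz
    apply ContinuousAt.continuousWithinAt
    exact (Complex.continuousAt_sqrt (Or.inl (by linarith [key z]))).comp
      (f := fun z => 1 - b * z) (by fun_prop)

lemma helson_factor_linear (a : ℂ) : HelsonFactor (fun z => z - a) := by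
  by_cases ha : ‖a‖ < 1
  · have hne : ∀ z : ℂ, ‖z‖ ≤ 1 → 1 - (starRingEnd ℂ a) * z ≠ 0 := by
      intro z hz h
      have h1 : (starRingEnd ℂ a) * z = 1 := by linear_combination -h
      have h2 := congrArg norm h1
      rw [norm_mul, RCLike.norm_conj, norm_one] at h2
      nlinarith [norm_nonneg a, norm_nonneg z]
    have hs := helson_dcoc_sqrt (starRingEnd ℂ a) (by rw [RCLike.norm_conj]; exact ha.le)
    have hnorm : ∀ z : ℂ, ‖z‖ = 1 → ‖1 - (starRingEnd ℂ a) * z‖ = ‖z - a‖ := by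
      intro z hz
      have h1 : 1 - (starRingEnd ℂ a) * z = (starRingEnd ℂ (z - a)) * z := by
        have : (starRingEnd ℂ z) * z = 1 := by
          rw [mul_comm, Complex.mul_conj, Complex.normSq_eq_norm_sq, hz]; simp
        rw [map_sub, sub_mul, this]
      rw [h1, norm_mul, RCLike.norm_conj, hz, mul_one]
    have hB : DiffContOnCl ℂ (fun z => (z - a) / (1 - (starRingEnd ℂ a) * z))
        (Metric.ball 0 1) := by
      apply DifferentiableOn.diffContOnCl
      intro z hz
      rw [closure_ball _ one_ne_zero] at hz
      have := hne z (by simpa using hz)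
      apply DifferentiableAt.differentiableWithinAt
      fun_prop (disch := assumption)
    refine ⟨fun z => (z - a) / (1 - (starRingEnd ℂ a) * z) *
      Complex.sqrt (1 - (starRingEnd ℂ a) * z), _, ⟨hB.1.mul hs.1, hB.2.mul hs.2⟩, hs, ?_, ?_, ?_⟩
    · intro z hz
      have := hne z (by simpa using (le_of_lt (by simpa using hz : ‖z‖ < 1)))
      simp only
      rw [mul_assoc, ← sq, helson_sqrt_sq, div_mul_cancel₀ _ this]
    · intro z hz
      have := norm_ne_zero_iff.2 (hne z hz.le)
      simp only
      rw [norm_mul, mul_pow, helson_norm_sqrt, norm_div, hnorm z hz, div_self, one_pow, one_mul]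
      rwa [← hnorm z hz]
    · intro z hz
      simp only
      rw [helson_norm_sqrt, hnorm z hz]
  · have ha : 1 ≤ ‖a‖ := not_lt.1 ha
    have ha0 : a ≠ 0 := by
      rintro rfl
      simp at ha
      linarith
    have hs := helson_dcoc_sqrt a⁻¹ (by rw [norm_inv]; exact inv_le_one_of_one_le₀ ha)
    have hF : HelsonFactor (fun z => 1 - a⁻¹ * z) := by
      refine ⟨_, _, hs, hs, ?_, fun z _ => helson_norm_sqrt _, fun z _ => helson_norm_sqrt _⟩
      intro z _
      simp only
      rw [← sq, helson_sqrt_sq]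
    have := (helson_factor_const (-a)).mul hF
    convert this using 2 with z
    field_simp
    ring

lemma helson_factor_poly (p : Polynomial ℂ) : HelsonFactor (fun z => p.eval z) := by
  have hp := (IsAlgClosed.splits p).eq_prod_roots
  rw [hp]
  simp only [Polynomial.eval_mul, Polynomial.eval_C]
  refine (helson_factor_const _).mul ?_
  induction p.roots using Multiset.induction with
  | empty => simpa using helson_factor_const 1
  | cons a s ih =>
    simp only [Multiset.map_cons, Multiset.prod_cons, Polynomial.eval_mul, Polynomial.eval_sub,
      Polynomial.eval_X, Polynomial.eval_C]
    exact (helson_factor_linear a).mul ih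

lemma helson_bessel {u : ℂ → ℂ} (hu : DiffContOnCl ℂ u (Metric.ball 0 1)) (M : ℕ) :
    ∑ k ∈ range M, ‖iteratedDeriv k u 0 / (k.factorial : ℂ)‖ ^ 2 ≤
      (2 * π)⁻¹ * ∫ θ in (0:ℝ)..(2 * π), ‖u (Complex.exp (Complex.I * θ))‖ ^ 2 := by
  have hpi : (0:ℝ) < 2 * π := by positivity
  have hcont : Continuous (fun θ : ℝ => u (Complex.exp (Complex.I * θ))) := by
    have hc := hu.2
    rw [closure_ball _ one_ne_zero] at hc
    refine hc.comp_continuous (by fun_prop) (fun θ => ?_)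
    simp [mul_comm Complex.I, Complex.norm_exp_ofReal_mul_I]
  have hL2 : MemLp (fun θ : ℝ => u (Complex.exp (Complex.I * θ))) 2
      (volume.restrict (Set.Ioc 0 (2 * π))) := by
    rw [memLp_two_iff_integrable_sq_norm hcont.aestronglyMeasurable]
    exact (hcont.norm.pow 2).integrableOn_Ioc
  have hsum := hasSum_sq_fourierCoeffOn hpi hL2
  have hcoef : ∀ k : ℕ, fourierCoeffOn hpi (fun θ : ℝ => u (Complex.exp (Complex.I * θ))) (k : ℤ)
      = iteratedDeriv k u 0 / (k.factorial : ℂ) := by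
    intro k
    have hC := DiffContOnCl.circleIntegral_one_div_sub_center_pow_smul one_pos k hu
    rw [fourierCoeffOn_eq_integral]
    have : iteratedDeriv k u 0 / (k.factorial : ℂ) = (2 * π * Complex.I)⁻¹ *
        ((2 * π * Complex.I / k.factorial) • iteratedDeriv k u 0) := by
      have := Complex.two_pi_I_ne_zero
      rw [smul_eq_mul]
      field_simp
    rw [this, ← hC, circleIntegral]
    have h2 : ∀ θ : ℝ, deriv (circleMap 0 1) θ • (1 / (circleMap 0 1 θ - 0) ^ (k + 1)) •
        u (circleMap 0 1 θ) = Complex.I * (fourier (-(k:ℤ)) (θ : AddCircle (2 * π - 0)) •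
          u (Complex.exp (Complex.I * θ))) := by
      intro θ
      rw [fourier_coe_apply]
      have hne := Complex.exp_ne_zero (Complex.I * θ)
      have h3 : Complex.exp (2 * π * Complex.I * ((-(k:ℤ) : ℤ) : ℂ) * θ / ((2 * π - 0 : ℝ) : ℂ))
         = (Complex.exp (Complex.I * θ) ^ k)⁻¹ := by
        rw [← Complex.exp_nat_mul, ← Complex.exp_neg]
        congr 1
        push_cast
        have : (π : ℂ) ≠ 0 := by exact_mod_cast pi_ne_zero
        field_simp
        ring
      rw [h3]
      simp only [deriv_circleMap, circleMap, Complex.ofReal_one, one_mul, zero_add, sub_zero,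
        smul_eq_mul, mul_comm (θ : ℂ) Complex.I]
      field_simp
      ring
    simp_rw [h2]
    rw [intervalIntegral.integral_const_mul]
    have : (π : ℂ) ≠ 0 := by exact_mod_cast pi_ne_zero
    rw [Complex.real_smul]
    push_cast
    field_simp
    simp
  have h1 := hsum.summable.sum_le_tsum ((range M).map Nat.castEmbedding) (fun i _ => by positivity)
  rw [hsum.tsum_eq] at h1
  simp only [Finset.sum_map, Nat.castEmbedding_apply, hcoef] at h1
  simpa using h1

lemma helson_one (M : ℕ) (c : Fin M → ℂ) :
    ∑ n, ‖c n‖ ^ 2 / ((n : ℝ) + 1) ≤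
      ((2 * π)⁻¹ * ∫ θ in (0:ℝ)..(2 * π),
        ‖∑ n, c n * Complex.exp (Complex.I * θ) ^ (n : ℕ)‖) ^ 2 := by
  let d : ℕ → ℂ := fun n => if h : n < M then c ⟨n, h⟩ else 0
  let p : Polynomial ℂ := ∑ n ∈ range M, Polynomial.C (d n) * Polynomial.X ^ n
  have hpe : ∀ z, p.eval z = ∑ n ∈ range M, d n * z ^ n := by
    intro z
    simp [p, Polynomial.eval_finsetSum]
  have hpc : ∀ z, p.eval z = ∑ n : Fin M, c n * z ^ (n : ℕ) := by
    intro z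
    rw [hpe, Finset.sum_range]
    simp [d]
  obtain ⟨u, v, hu, hv, h1, h2, h3⟩ := helson_factor_poly p
  let U : ℕ → ℂ := fun k => iteratedDeriv k u 0 / (k.factorial : ℂ)
  let V : ℕ → ℂ := fun k => iteratedDeriv k v 0 / (k.factorial : ℂ)
  have h0 : (0:ℂ) ∈ Metric.ball (0:ℂ) 1 := by simp
  have han : ∀ {w : ℂ → ℂ}, DiffContOnCl ℂ w (Metric.ball 0 1) → ∀ n : ℕ, ContDiffAt ℂ n w 0 :=
    fun hw n => (hw.1.analyticAt (Metric.isOpen_ball.mem_nhds h0)).contDiffAt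
  have hconv : ∀ n < M, d n = ∑ k ∈ range (n + 1), U k * V (n - k) := by
    intro n hn
    have e1 : iteratedDeriv n (fun z => p.eval z) 0 = iteratedDeriv n (fun z => u z * v z) 0 := by
      apply Filter.EventuallyEq.iteratedDeriv_eq
      filter_upwards [Metric.isOpen_ball.mem_nhds h0] with z hz using h1 z hz
    have e2 : iteratedDeriv n (fun z => p.eval z) 0 = d n * n.factorial := by
      simp_rw [hpe]
      rw [iteratedDeriv_fun_sum (fun i _ => by fun_prop)]
      have hi : ∀ i, iteratedDeriv n (fun z : ℂ => d i * z ^ i) 0 =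
          d i * if n = i then (i.factorial : ℂ) else 0 := by
        intro i
        rw [iteratedDeriv_const_mul_field (d i) (fun z : ℂ => z ^ i), iteratedDeriv_fun_pow_zero]
        split_ifs <;> simp
      simp_rw [hi]
      simp only [mul_ite, mul_zero, Finset.sum_ite_eq, mem_range, hn, if_true]
    rw [e2, iteratedDeriv_fun_mul (han hu n) (han hv n)] at e1
    have hn0 : (n.factorial : ℂ) ≠ 0 := by exact_mod_cast n.factorial_ne_zero
    rw [← mul_left_inj' hn0, e1, Finset.sum_mul]
    refine Finset.sum_congr rfl fun k hk => ?_
    have hk : k ≤ n := by simpa [Nat.lt_succ_iff] using hk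
    have hch : (n.factorial : ℂ) = n.choose k * k.factorial * (n - k).factorial := by
      exact_mod_cast (Nat.choose_mul_factorial_mul_factorial hk).symm
    have : (k.factorial : ℂ) ≠ 0 := by exact_mod_cast k.factorial_ne_zero
    have : ((n-k).factorial : ℂ) ≠ 0 := by exact_mod_cast (n-k).factorial_ne_zero
    simp only [U, V]
    rw [hch]
    field_simp
  have hcs : ∀ n < M, ‖d n‖ ^ 2 / ((n : ℝ) + 1) ≤
      ∑ k ∈ range (n + 1), ‖U k‖ ^ 2 * ‖V (n - k)‖ ^ 2 := by
    intro n hn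
    rw [div_le_iff₀ (by positivity), hconv n hn]
    calc ‖∑ k ∈ range (n + 1), U k * V (n - k)‖ ^ 2
        ≤ (∑ k ∈ range (n + 1), ‖U k * V (n - k)‖) ^ 2 := by
          gcongr; exact norm_sum_le _ _
      _ ≤ _ := by
          have := sq_sum_le_card_mul_sum_sq (s := range (n+1)) (f := fun k => ‖U k * V (n - k)‖)
          simp only [card_range, norm_mul, mul_pow] at this ⊢
          push_cast at this
          linarith
  have hint : ∀ θ : ℝ, ‖Complex.exp (Complex.I * θ)‖ = 1 := by
    intro θ
    simp [mul_comm Complex.I, Complex.norm_exp_ofReal_mul_I]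
  have bu := helson_bessel hu M
  have bv := helson_bessel hv M
  simp_rw [h2 _ (hint _), hpc] at bu
  simp_rw [h3 _ (hint _), hpc] at bv
  calc ∑ n, ‖c n‖ ^ 2 / ((n : ℝ) + 1) = ∑ n ∈ range M, ‖d n‖ ^ 2 / ((n : ℝ) + 1) := by
        rw [Finset.sum_range]; simp [d]
    _ ≤ ∑ n ∈ range M, ∑ k ∈ range (n + 1), ‖U k‖ ^ 2 * ‖V (n - k)‖ ^ 2 :=
        Finset.sum_le_sum fun n hn => hcs n (by simpa using hn)
    _ ≤ ∑ k ∈ range M, ∑ l ∈ range M, ‖U k‖ ^ 2 * ‖V l‖ ^ 2 := by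
        rw [← Finset.sum_product', Finset.sum_sigma']
        have hinj : Set.InjOn (fun x : (Σ _ : ℕ, ℕ) => (x.2, x.1 - x.2))
            ((range M).sigma fun n => range (n + 1)) := by
          rintro ⟨a, b⟩ hx ⟨a', b'⟩ hy h
          simp only [Finset.coe_sigma, Set.mem_sigma_iff, Finset.mem_coe, mem_range] at hx hy
          simp only [Prod.mk.injEq] at h
          obtain ⟨rfl, h⟩ := h
          have : a = a' := by omega
          subst this
          rfl
        rw [← Finset.sum_image (g := fun x : (Σ _ : ℕ, ℕ) => (x.2, x.1 - x.2))
          (f := fun x : ℕ × ℕ => ‖U x.1‖ ^ 2 * ‖V x.2‖ ^ 2) hinj]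
        refine Finset.sum_le_sum_of_subset_of_nonneg ?_ (fun _ _ _ => by positivity)
        intro x hx
        simp only [Finset.mem_image, Finset.mem_sigma, mem_range] at hx
        obtain ⟨⟨a, b⟩, ⟨h1, h2⟩, rfl⟩ := hx
        simp only [Finset.mem_product, mem_range] at *
        omega
    _ = (∑ k ∈ range M, ‖U k‖ ^ 2) * (∑ l ∈ range M, ‖V l‖ ^ 2) := by
        rw [Finset.sum_mul_sum]
    _ ≤ _ := by
        rw [sq]
        exact mul_le_mul bu bv (by positivity) (le_trans (by positivity) bu)

lemma helson_minkowski {ι : Type*} [Fintype ι] (μ : Measure ℝ) (w : ι → ℝ) (hw : ∀ i, 0 ≤ w i)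
    (g : ι → ℝ → ℝ) (hg : ∀ i, Integrable (g i) μ) :
    Real.sqrt (∑ i, w i * (∫ x, g i x ∂μ) ^ 2) ≤ ∫ x, Real.sqrt (∑ i, w i * (g i x) ^ 2) ∂μ := by
  let F : ℝ → EuclideanSpace ℝ ι := fun x => WithLp.toLp 2 (fun i => Real.sqrt (w i) * g i x)
  have hnorm : ∀ y : ι → ℝ, ‖(WithLp.toLp 2 (fun i => Real.sqrt (w i) * y i) :
      EuclideanSpace ℝ ι)‖ = Real.sqrt (∑ i, w i * (y i) ^ 2) := by
    intro y
    rw [EuclideanSpace.norm_eq]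
    congr 1
    refine Finset.sum_congr rfl fun i _ => ?_
    simp only [Real.norm_eq_abs, sq_abs]
    rw [mul_pow, Real.sq_sqrt (hw i)]
  have hF : Integrable F μ := by
    have : Integrable (fun x => (fun i => Real.sqrt (w i) * g i x)) μ :=
      Integrable.of_eval fun i => (hg i).const_mul _
    exact ((PiLp.continuousLinearEquiv 2 ℝ (fun _ : ι => ℝ)).symm.toContinuousLinearMap).integrable_comp this
  have hI : ∫ x, F x ∂μ = WithLp.toLp 2 (fun i => Real.sqrt (w i) * ∫ x, g i x ∂μ) := by
    ext i
    have := (EuclideanSpace.proj (𝕜 := ℝ) i : EuclideanSpace ℝ ι →L[ℝ] ℝ).integral_comp_comm hF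
    refine Eq.trans this.symm ?_
    exact integral_const_mul _ _
  have := norm_integral_le_integral_norm F (μ := μ)
  rw [hI, hnorm] at this
  simp only [F, hnorm] at this
  exact this

lemma helson_box (M N : ℕ) (c : (Fin N → Fin M) → ℂ) :
    (2 * π) ^ N * Real.sqrt (∑ α, ‖c α‖ ^ 2 / ∏ j, (((α j : ℕ) : ℝ) + 1)) ≤
      ∫ θ : Fin N → ℝ, ‖∑ α, c α * ∏ j, Complex.exp (Complex.I * θ j) ^ (α j : ℕ)‖
        ∂(Measure.pi fun _ => volume.restrict (Set.Icc 0 (2 * π))) := by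
  have hpi : (0:ℝ) < 2 * π := by positivity
  induction N with
  | zero => simp [measureReal_def, Real.sqrt_sq]
  | succ N ih =>
    set μ : Measure ℝ := volume.restrict (Set.Icc 0 (2 * π)) with hμ
    let W : (Fin N → Fin M) → ℝ := fun β => ∏ j, (((β j : ℕ) : ℝ) + 1)
    have hW : ∀ β, 0 < W β := fun β => Finset.prod_pos fun j _ => by positivity
    let C : ℝ → (Fin N → Fin M) → ℂ := fun x β =>
      ∑ n : Fin M, c (Fin.cons n β) * Complex.exp (Complex.I * x) ^ (n : ℕ)
    let G : (Fin (N + 1) → ℝ) → ℝ := fun θ =>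
      ‖∑ α, c α * ∏ j, Complex.exp (Complex.I * θ j) ^ (α j : ℕ)‖
    have hGc : Continuous G := by fun_prop
    have hsplit : ∀ {E : Type} [AddCommMonoid E] (f : (Fin (N + 1) → Fin M) → E),
        ∑ α, f α = ∑ β : Fin N → Fin M, ∑ n : Fin M, f (Fin.cons n β) := by
      intro E _ f
      rw [← (Fin.consEquiv (fun _ : Fin (N + 1) => Fin M)).sum_comp, Fintype.sum_prod_type_right]
      rfl
    have hGcons : ∀ x y, G (Fin.cons x y) =
        ‖∑ β, C x β * ∏ j, Complex.exp (Complex.I * y j) ^ (β j : ℕ)‖ := by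
      intro x y
      simp only [G, C]
      rw [hsplit]
      simp only [Fin.prod_univ_succ, Fin.cons_zero, Fin.cons_succ, Finset.sum_mul, mul_assoc]
    have hbd : ∀ θ, ‖G θ‖ ≤ ∑ α, ‖c α‖ := by
      intro θ
      simp only [G, norm_norm]
      refine (norm_sum_le _ _).trans (Finset.sum_le_sum fun α _ => ?_)
      rw [norm_mul, norm_prod]
      simp [mul_comm Complex.I, Complex.norm_exp_ofReal_mul_I]
    have hfub : ∫ θ, G θ ∂(Measure.pi fun _ : Fin (N + 1) => μ) =
        ∫ x, ∫ y, G (Fin.cons x y) ∂(Measure.pi fun _ : Fin N => μ) ∂μ := by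
      have hmp := (measurePreserving_piFinSuccAbove (fun _ : Fin (N + 1) => μ) 0).symm
      rw [← hmp.integral_comp', integral_prod]
      · simp [MeasurableEquiv.piFinSuccAbove_symm_apply, Fin.insertNthEquiv]
      · refine Integrable.of_bound (C := ∑ α, ‖c α‖) ?_ (Filter.Eventually.of_forall fun _ => hbd _)
        exact (hGc.measurable.comp (MeasurableEquiv.measurable _)).aestronglyMeasurable
    have hCc : ∀ β, Continuous (fun x => C x β) := fun β => by fun_prop
    have hCn : ∀ β, Integrable (fun x => ‖C x β‖) μ := fun β =>
      (hCc β).norm.integrableOn_Icc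
    have hone : ∀ β, (2 * π) ^ 2 * ∑ n : Fin M, ‖c (Fin.cons n β)‖ ^ 2 / ((n : ℝ) + 1) ≤
        (∫ x, ‖C x β‖ ∂μ) ^ 2 := by
      intro β
      have h := helson_one M (fun n => c (Fin.cons n β))
      rw [intervalIntegral.integral_of_le hpi.le, ← integral_Icc_eq_integral_Ioc, mul_pow, inv_pow,
        ← div_eq_inv_mul, le_div_iff₀ (by positivity)] at h
      rw [mul_comm]
      exact h
    have hsum : ∑ α, ‖c α‖ ^ 2 / ∏ j, (((α j : ℕ) : ℝ) + 1) =
        ∑ β, (W β)⁻¹ * ∑ n : Fin M, ‖c (Fin.cons n β)‖ ^ 2 / ((n : ℝ) + 1) := by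
      rw [hsplit]
      refine Finset.sum_congr rfl fun β _ => ?_
      rw [Finset.mul_sum]
      refine Finset.sum_congr rfl fun n _ => ?_
      have := (hW β).ne'
      simp only [Fin.prod_univ_succ, Fin.cons_zero, Fin.cons_succ, W] at *
      field_simp
    change _ ≤ ∫ θ, G θ ∂(Measure.pi fun _ : Fin (N + 1) => μ)
    rw [hfub]
    calc (2 * π) ^ (N + 1) * Real.sqrt (∑ α, ‖c α‖ ^ 2 / ∏ j, (((α j : ℕ) : ℝ) + 1))
        = (2 * π) ^ N * Real.sqrt (∑ β, (W β)⁻¹ *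
            ((2 * π) ^ 2 * ∑ n : Fin M, ‖c (Fin.cons n β)‖ ^ 2 / ((n : ℝ) + 1))) := by
          rw [hsum, pow_succ, mul_assoc]
          congr 1
          rw [← Real.sqrt_sq hpi.le, ← Real.sqrt_mul (by positivity), Real.sqrt_sq hpi.le,
            Finset.mul_sum]
          congr 1
          exact Finset.sum_congr rfl fun β _ => by ring
      _ ≤ (2 * π) ^ N * Real.sqrt (∑ β, (W β)⁻¹ * (∫ x, ‖C x β‖ ∂μ) ^ 2) := by
          gcongr with β
          exact hone β
      _ ≤ (2 * π) ^ N * ∫ x, Real.sqrt (∑ β, (W β)⁻¹ * ‖C x β‖ ^ 2) ∂μ := by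
          gcongr
          exact helson_minkowski μ _ (fun β => inv_nonneg.2 (hW β).le) (fun β x => ‖C x β‖) hCn
      _ = ∫ x, (2 * π) ^ N * Real.sqrt (∑ β, ‖C x β‖ ^ 2 / W β) ∂μ := by
          rw [← integral_const_mul]
          simp only [div_eq_inv_mul]
      _ ≤ _ := by
          refine integral_mono_ae ?_ ?_ (Filter.Eventually.of_forall fun x => ?_)
          · refine Continuous.integrableOn_Icc ?_
            fun_prop
          · refine Integrable.of_bound (C := (∑ α, ‖c α‖) *
              (Measure.pi fun _ : Fin N => μ).real Set.univ) ?_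
              (Filter.Eventually.of_forall fun x => ?_)
            · have hc2 : Continuous (fun p : ℝ × (Fin N → ℝ) =>
                  G (Fin.cons p.1 p.2 : Fin (N + 1) → ℝ)) := by
                refine hGc.comp ?_
                refine continuous_pi fun j => ?_
                refine Fin.cases ?_ (fun i => ?_) j
                · simpa using continuous_fst
                · simp only [Fin.cons_succ]
                  fun_prop
              exact hc2.stronglyMeasurable.integral_prod_right.aestronglyMeasurable
            · exact norm_integral_le_of_norm_le_const (Filter.Eventually.of_forall fun _ => hbd _)
          · simp only [hGcons]
            exact ih (C x)

/-- **Helson's inequality.** For a polynomial `f(w) = ∑_α c_α w^α` in `N` complex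
variables (coefficients supported on a finite set `S`),
`(∑_α |c_α|² / ∏_j (α_j+1))^{1/2} ≤ ∫_{𝕋^N} |f(w)| dσ(w)`,
the torus `𝕋^N` being parametrized by `w_j = e^{iθ_j}`, `θ ∈ [0,2π]^N`, with
normalized Haar measure `dσ = dθ/(2π)^N`. -/
theorem helson_inequality (N : ℕ) (hN : 1 ≤ N) (S : Finset (Fin N → ℕ))
    (c : (Fin N → ℕ) → ℂ) (hc : ∀ α, c α ≠ 0 → α ∈ S) :
    Real.sqrt (∑ α ∈ S, ‖c α‖ ^ 2 / ∏ j, ((α j : ℝ) + 1))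
      ≤ (1 / (2 * π) ^ N) *
        ∫ θ : Fin N → ℝ in Set.univ.pi fun _ => Set.Icc 0 (2 * π),
          ‖∑ α ∈ S, c α * ∏ j, Complex.exp (Complex.I * θ j) ^ α j‖ := by
  obtain ⟨M, hM⟩ : ∃ M, ∀ α ∈ S, ∀ j, α j < M := by
    refine ⟨(S.sup fun α => ∑ j, α j) + 1, fun α hα j => Nat.lt_succ_of_le ?_⟩
    exact (Finset.single_le_sum (f := α) (fun _ _ => Nat.zero_le _) (Finset.mem_univ j)).trans
      (Finset.le_sup (f := fun α : Fin N → ℕ => ∑ j, α j) hα)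
  have key : ∀ {E : Type} [AddCommMonoid E] (f : (Fin N → ℕ) → E), (∀ α, c α = 0 → f α = 0) →
      ∑ α ∈ S, f α = ∑ α : Fin N → Fin M, f (fun j => (α j : ℕ)) := by
    intro E _ f hf
    have hinj : Function.Injective (fun (α : Fin N → Fin M) (j : Fin N) => (α j : ℕ)) := by
      intro a b h
      funext j
      exact Fin.ext (congrFun h j)
    rw [← Finset.sum_image (f := f) (g := fun (α : Fin N → Fin M) (j : Fin N) => (α j : ℕ))
      hinj.injOn]
    refine Finset.sum_subset ?_ ?_
    · intro α hα
      exact Finset.mem_image.2 ⟨fun j => ⟨α j, hM α hα j⟩, Finset.mem_univ _, rfl⟩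
    · intro α _ hα
      exact hf α (by_contra fun h => hα (hc α h))
  have hb := helson_box M N (fun α => c (fun j => (α j : ℕ)))
  rw [key _ (fun α h => by simp [h]), volume_pi, Measure.restrict_pi_pi, one_div,
    ← div_eq_inv_mul, le_div_iff₀ (by positivity), mul_comm]
  refine hb.trans (le_of_eq ?_)
  congr 1
  funext θ
  rw [key _ (fun α h => by simp [h])]
end
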